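/- arXiv:1304.7541 — 4 statements merged into one kernel-verified Lean document; each statement's English description precedes it below -/
import Mathlib

section
/- Suppose m ≥ 1 is an integer divisible by l(l−1). Then (I^{(m)})_d = 0 for every degree d with 0 ≤ d < 2m − m/l, and dim_K (I^{(m)})_{2m − m/l} = 1. In particular, the least degree of a nonzero homogeneous element of I^{(m)} is exactly 2m − m/l. -/
open MvPolynomial Filter

/-- The degree-`d` homogeneous component of a homogeneous ideal `J ⊆ K[x,y,z]`,
as a `K`-vector subspace. -/
noncomputable def degComp {K : Type*} [Field K] (J : Ideal (MvPolynomial (Fin 3) K)) (d : ℕ) :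
    Submodule K (MvPolynomial (Fin 3) K) :=
  Submodule.restrictScalars K J ⊓ homogeneousSubmodule (Fin 3) K d

/-- `dim_K J_d`. -/
noncomputable def hdim {K : Type*} [Field K] (J : Ideal (MvPolynomial (Fin 3) K)) (d : ℕ) : ℕ :=
  Module.finrank K (degComp J d)

/-- The subspace `R_1 · J_{d-1}` of products of linear forms with degree-`(d-1)` elements. -/
noncomputable def oneGen {K : Type*} [Field K] (J : Ideal (MvPolynomial (Fin 3) K)) (d : ℕ) :
    Submodule K (MvPolynomial (Fin 3) K) :=
  Submodule.span K
    {x | ∃ f ∈ homogeneousSubmodule (Fin 3) K 1, ∃ g ∈ degComp J (d - 1), x = f * g}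

/-- `v_d(J) = dim_K J_d / (R_1 · J_{d-1})`, the number of minimal generators of `J`
in degree `d`. -/
noncomputable def vnum {K : Type*} [Field K] (J : Ideal (MvPolynomial (Fin 3) K)) (d : ℕ) : ℕ :=
  Module.finrank K
    (↥(degComp J d) ⧸ Submodule.comap (degComp J d).subtype (oneGen J d))


namespace FatPts

/-- A map congruent mod `J` to the cone over a point kills the vanishing ideal of the point. -/
lemma mem_of_vanish {K : Type*} [Field K] {B : Type*} [CommRing B] [Algebra K B]
    (J : Ideal B) (ψ : MvPolynomial (Fin 3) K →ₐ[K] B) (v : Fin 3 → K) (T : B)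
    (h : ∀ k, ψ (X k) - algebraMap K B (v k) * T ∈ J)
    (F : MvPolynomial (Fin 3) K) (hF : ∀ n, eval v (homogeneousComponent n F) = 0) :
    ψ F ∈ J := by
  have key : ∀ n (G : MvPolynomial (Fin 3) K), G.IsHomogeneous n → eval v G = 0 → ψ G ∈ J := by
    intro n G hG h0
    rw [← Ideal.Quotient.eq_zero_iff_mem]
    have e1 : Ideal.Quotient.mk J (ψ G) =
        aeval (fun k => algebraMap K (B ⧸ J) (v k) * Ideal.Quotient.mk J T) G := by
      have : (Ideal.Quotient.mkₐ K J).comp ψ =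
          aeval (fun k => algebraMap K (B ⧸ J) (v k) * Ideal.Quotient.mk J T) := by
        apply MvPolynomial.algHom_ext
        intro k
        simp only [AlgHom.comp_apply, aeval_X, Ideal.Quotient.mkₐ_eq_mk]
        have := Ideal.Quotient.eq.2 (h k)
        rw [this, map_mul]
        rfl
      rw [← this]; rfl
    rw [e1]
    have e2 : aeval (fun k => algebraMap K (B ⧸ J) (v k) * Ideal.Quotient.mk J T) G
        = algebraMap K (B ⧸ J) (eval v G) * (Ideal.Quotient.mk J T) ^ n := by
      rw [aeval_def, eval₂_eq, eval_eq, map_sum, Finset.sum_mul]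
      refine Finset.sum_congr rfl fun d hd => ?_
      have hd' : ∑ i ∈ d.support, d i = n := by
        have := hG (mem_support_iff.1 hd)
        rw [← this, Finsupp.weight_apply, Finsupp.sum]
        simp
      simp only [mul_pow, Finset.prod_mul_distrib, map_mul, map_prod, map_pow]
      rw [Finset.prod_pow_eq_pow_sum, hd', mul_assoc]
    rw [e2, h0, map_zero, zero_mul]
  rw [← sum_homogeneousComponent F, map_sum]
  exact Ideal.sum_mem _ fun n _ => key n _ (homogeneousComponent_isHomogeneous n F) (hF n)

lemma coeff_dvd {A : Type*} [CommRing A] (lam : A) (m : ℕ) :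
    ∀ f : Polynomial A, f ∈ (Ideal.span {Polynomial.X, Polynomial.C lam}) ^ m →
      ∀ j, lam ^ (m - j) ∣ f.coeff j := by
  let I : ℕ → Ideal (Polynomial A) := fun m =>
    { carrier := {f | ∀ j, lam ^ (m - j) ∣ f.coeff j}
      add_mem' := fun {a b} ha hb j => by
        rw [Polynomial.coeff_add]; exact dvd_add (ha j) (hb j)
      zero_mem' := fun j => by simp
      smul_mem' := fun c f hf j => by
        rw [smul_eq_mul, Polynomial.coeff_mul]
        refine Finset.dvd_sum fun x hx => ?_
        have := Finset.HasAntidiagonal.mem_antidiagonal.1 hx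
        exact ((pow_dvd_pow lam (by omega)).trans (hf x.2)).mul_left _ }
  have : ∀ m, (Ideal.span {Polynomial.X, Polynomial.C lam}) ^ m ≤ I m := by
    intro m
    induction m with
    | zero => intro f _ j; simp
    | succ m ih =>
      rw [pow_succ, Ideal.mul_le]
      intro f hf g hg
      obtain ⟨a, b, rfl⟩ := Ideal.mem_span_pair.1 hg
      have h1 : f * (a * Polynomial.X + b * Polynomial.C lam)
        = a * (f * Polynomial.X) + b * (f * Polynomial.C lam) := by ring
      rw [h1]
      refine (I (m+1)).add_mem ((I (m+1)).mul_mem_left _ ?_) ((I (m+1)).mul_mem_left _ ?_)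
      · intro j
        cases j with
        | zero => simp
        | succ j =>
          rw [Polynomial.coeff_mul_X]
          have := ih hf j
          convert this using 2
          omega
      · intro j
        rw [Polynomial.coeff_mul_C]
        have := mul_dvd_mul_right (ih hf j) lam
        rw [← pow_succ] at this
        exact (pow_dvd_pow lam (by omega)).trans this
  exact fun f hf => this m hf

lemma relprime {K : Type*} [Field K] (a b c d : K) (h : a * d - b * c ≠ 0) :
    IsRelPrime (C b * X 0 - C a * X 1 : MvPolynomial (Fin 2) K) (C d * X 0 - C c * X 1) := by
  intro g h1 h2
  have hX1 : g ∣ (X 1 : MvPolynomial (Fin 2) K) := by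
    have h3 := dvd_sub (h2.mul_left (C b)) (h1.mul_left (C d))
    have e : C b * (C d * X 0 - C c * X 1) - C d * (C b * X 0 - C a * X 1) =
      C (a * d - b * c) * (X 1 : MvPolynomial (Fin 2) K) := by
      simp only [map_sub, map_mul]; ring
    rw [e] at h3
    have := h3.mul_left (C (a * d - b * c)⁻¹)
    rwa [← mul_assoc, ← C_mul, inv_mul_cancel₀ h, C_1, one_mul] at this
  have hX0 : g ∣ (X 0 : MvPolynomial (Fin 2) K) := by
    have h3 := dvd_sub (h2.mul_left (C a)) (h1.mul_left (C c))
    have e : C a * (C d * X 0 - C c * X 1) - C c * (C b * X 0 - C a * X 1) =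
      C (a * d - b * c) * (X 0 : MvPolynomial (Fin 2) K) := by
      simp only [map_sub, map_mul]; ring
    rw [e] at h3
    have := h3.mul_left (C (a * d - b * c)⁻¹)
    rwa [← mul_assoc, ← C_mul, inv_mul_cancel₀ h, C_1, one_mul] at this
  have hirr : Irreducible (X 0 : MvPolynomial (Fin 2) K) := (X_prime).irreducible
  rcases (hirr.dvd_iff).1 hX0 with hu | ha
  · exact hu
  · have := ha.dvd.trans hX1
    rw [X_dvd_X] at this
    exact absurd this (by decide)

/-- The substitution. -/
noncomputable def psi {K : Type*} [Field K] (q u w : Fin 3 → K) :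
    MvPolynomial (Fin 3) K →ₐ[K] MvPolynomial (Fin 3) K :=
  aeval (fun k => C (q k) * X 0 + C (u k) * X 1 + C (w k) * X 2)

lemma psi_hom {K : Type*} [Field K] (q u w : Fin 3 → K) {F : MvPolynomial (Fin 3) K} {d : ℕ}
    (hF : F.IsHomogeneous d) : (psi q u w F).IsHomogeneous d := by
  have := hF.aeval (fun k => C (q k) * X 0 + C (u k) * X 1 + C (w k) * X 2 :
    Fin 3 → MvPolynomial (Fin 3) K) (n := 1)
    (fun k => ((isHomogeneous_C_mul_X _ _).add (isHomogeneous_C_mul_X _ _)).add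
      (isHomogeneous_C_mul_X _ _))
  simpa [psi] using this

lemma psi_inj {K : Type*} [Field K] [CharZero K] (q u w : Fin 3 → K)
    (hs : ∀ z : Fin 3 → K, ∃ a b c : K, z = a • q + b • u + c • w) :
    Function.Injective (psi q u w) := by
  rw [injective_iff_map_eq_zero]
  intro F hF
  apply MvPolynomial.funext
  intro z
  obtain ⟨a, b, c, rfl⟩ := hs z
  have h := congrArg (eval ![a, b, c]) hF
  rw [map_zero] at h ⊢
  rw [← h]
  have : (aeval (a • q + b • u + c • w) : MvPolynomial (Fin 3) K →ₐ[K] K) =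
      (aeval ![a, b, c]).comp (psi q u w) := by
    apply MvPolynomial.algHom_ext
    intro k
    simp [psi]
    ring
  exact congrArg (fun f => f F) this

lemma exists_coords {K : Type*} [Field K] (q u w L : Fin 3 → K)
    (hu : ∑ j, L j * u j = 0) (hw : ∑ j, L j * w j = 0) (hq : ∑ j, L j * q j ≠ 0)
    (hu0 : u ≠ 0) (huw : ∀ c : K, c • u ≠ w) :
    (∀ z : Fin 3 → K, ∃ a b c : K, z = a • q + b • u + c • w) ∧
    (∀ z : Fin 3 → K, ∑ j, L j * z j = 0 → ∃ b c : K, z = b • u + c • w) := by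
  have hlin : ∀ a b c : K, ∑ j, L j * (a • q + b • u + c • w) j = a * ∑ j, L j * q j := by
    intro a b c
    have : ∑ j, L j * (a • q + b • u + c • w) j =
      a * (∑ j, L j * q j) + b * (∑ j, L j * u j) + c * (∑ j, L j * w j) := by
      simp [Fin.sum_univ_three]; ring
    rw [this, hu, hw]; ring
  have hli : LinearIndependent K ![q, u, w] := by
    rw [Fintype.linearIndependent_iff]
    intro g hg
    rw [Fin.sum_univ_three] at hg
    simp only [Matrix.cons_val] at hg
    have h0 : g 0 = 0 := by
      have := hlin (g 0) (g 1) (g 2)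
      rw [hg] at this
      simp only [Pi.zero_apply, mul_zero, Finset.sum_const_zero] at this
      exact (mul_eq_zero.1 this.symm).resolve_right hq
    rw [h0, zero_smul, zero_add] at hg
    have h2 : g 2 = 0 := by
      by_contra h2
      apply huw (-(g 2)⁻¹ * g 1)
      have : g 1 • u = - (g 2 • w) := eq_neg_of_add_eq_zero_left hg
      rw [mul_smul, this, smul_neg, neg_smul, neg_neg, smul_smul, inv_mul_cancel₀ h2, one_smul]
    rw [h2, zero_smul, add_zero] at hg
    have h1 : g 1 = 0 := (smul_eq_zero.1 hg).resolve_right hu0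
    intro i; fin_cases i <;> assumption
  have hspan := hli.span_eq_top_of_card_eq_finrank' (by simp)
  have A : ∀ z : Fin 3 → K, ∃ a b c : K, z = a • q + b • u + c • w := by
    intro z
    have hz : z ∈ Submodule.span K (Set.range ![q, u, w]) := by rw [hspan]; trivial
    obtain ⟨c, hc⟩ := (Submodule.mem_span_range_iff_exists_fun K).1 hz
    refine ⟨c 0, c 1, c 2, ?_⟩
    rw [← hc, Fin.sum_univ_three]; simp
  refine ⟨A, fun z hz => ?_⟩
  obtain ⟨a, b, c, rfl⟩ := A z
  rw [hlin] at hz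
  have : a = 0 := (mul_eq_zero.1 hz).resolve_right hq
  exact ⟨b, c, by simp [this]⟩

lemma coords_det {K : Type*} [Field K] (u w : Fin 3 → K) (a b c d : K)
    (h0 : a • u + b • w ≠ 0) (h : ∀ t : K, t • (a • u + b • w) ≠ c • u + d • w) :
    a * d - b * c ≠ 0 := by
  intro hd
  by_cases hb : b = 0
  · have ha : a ≠ 0 := by rintro rfl; simp [hb] at h0
    have hd0 : d = 0 := by
      subst hb; simpa [ha] using hd
    apply h (c / a)
    rw [hb, hd0, zero_smul, add_zero, add_zero, smul_smul, div_mul_cancel₀ _ ha]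
  · apply h (d / b)
    rw [smul_add, smul_smul, smul_smul, div_mul_cancel₀ _ hb]
    congr 2
    field_simp
    linear_combination hd

end FatPts

namespace FatPts

lemma core {K : Type*} [Field K] (l b m d j e : ℕ) (hl : 2 < l) (hb : 1 ≤ b) (hm : m = l * b)
    (lam : Fin l → MvPolynomial (Fin 2) K)
    (hrel : ∀ i k, i ≠ k → IsRelPrime (lam i) (lam k))
    (hhom : ∀ i, (lam i).IsHomogeneous 1) (hne : ∀ i, lam i ≠ 0)
    (hd : d ≤ 2 * m - b) (g : MvPolynomial (Fin 2) K) (hg : g.IsHomogeneous e) (hje : j + e = d)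
    (hg0 : g ≠ 0) (hme : m ≤ e) (hdvd : ∀ i, lam i ^ (m - j) ∣ g) :
    d = 2 * m - b ∧ j = m - b ∧ ∃ c : K, g = C c * ∏ i, lam i ^ b := by
  have hprod : ∏ i, lam i ^ (m - j) ∣ g := by
    refine Finset.prod_dvd_of_isRelPrime ?_ fun i _ => hdvd i
    intro i _ k _ hik
    exact (hrel i k hik).pow
  obtain ⟨c, hc⟩ := hprod
  have hph : ∀ n : ℕ, (∏ i, lam i ^ n).IsHomogeneous (l * n) := by
    intro n
    have := IsHomogeneous.prod Finset.univ (fun i => lam i ^ n) (fun _ => 1 * n)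
      (fun i _ => (hhom i).pow n)
    simpa using this
  have hp0 : ∏ i, lam i ^ (m - j) ≠ 0 :=
    Finset.prod_ne_zero_iff.2 fun i _ => pow_ne_zero _ (hne i)
  have hc0 : c ≠ 0 := by rintro rfl; simp at hc; exact hg0 hc
  have hdeg : e = l * (m - j) + c.totalDegree := by
    rw [← hg.totalDegree hg0, hc, totalDegree_mul_of_isDomain hp0 hc0,
      (hph _).totalDegree hp0]
  have hbm : 3 * b ≤ m := by rw [hm]; exact Nat.mul_le_mul_right _ hl
  obtain ⟨s, hs⟩ : ∃ s, j + b + s = m := ⟨m - b - j, by omega⟩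
  have hmj : m - j = b + s := by omega
  rw [hmj, mul_add, ← hm] at hdeg
  have hls : 3 * s ≤ l * s := Nat.mul_le_mul_right _ hl
  have hs0 : s = 0 := by omega
  subst hs0
  refine ⟨by omega, by omega, ?_⟩
  have : c.totalDegree = 0 := by omega
  rw [totalDegree_eq_zero_iff_eq_C] at this
  rw [hmj, add_zero] at hc
  exact ⟨coeff 0 c, by rw [← this, hc, mul_comm]⟩

lemma lam_hom {K : Type*} [Field K] (a b : K) :
    (C b * X 0 - C a * X 1 : MvPolynomial (Fin 2) K).IsHomogeneous 1 :=
  (isHomogeneous_C_mul_X _ _).sub (isHomogeneous_C_mul_X _ _)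

lemma lam_ne {K : Type*} [Field K] (a b : K) (h : a ≠ 0 ∨ b ≠ 0) :
    (C b * X 0 - C a * X 1 : MvPolynomial (Fin 2) K) ≠ 0 := by
  intro h0
  have h1 := congrArg (eval ![1, 0]) h0
  have h2 := congrArg (eval ![0, 1]) h0
  simp at h1 h2
  tauto

/-- The substitution followed by the recursive view as univariate polynomial. -/
noncomputable def Psi {K : Type*} [Field K] (q u w : Fin 3 → K) :
    MvPolynomial (Fin 3) K →ₐ[K] Polynomial (MvPolynomial (Fin 2) K) :=
  (finSuccEquiv K 2).toAlgHom.comp (psi q u w)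

lemma Psi_X {K : Type*} [Field K] (q u w : Fin 3 → K) (k : Fin 3) :
    Psi q u w (X k) = Polynomial.C (C (q k)) * Polynomial.X +
      Polynomial.C (C (u k)) * Polynomial.C (X 0) + Polynomial.C (C (w k)) * Polynomial.C (X 1) := by
  have h1 : finSuccEquiv K 2 (X 1) = Polynomial.C (X 0) := finSuccEquiv_X_succ (j := 0)
  have h2 : finSuccEquiv K 2 (X 2) = Polynomial.C (X 1) := finSuccEquiv_X_succ (j := 1)
  have h3 : ∀ a : K, finSuccEquiv K 2 (C a) = Polynomial.C (C a) := fun a =>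
    (finSuccEquiv K 2).commutes a
  change finSuccEquiv K 2 (psi q u w (X k)) = _
  simp only [psi, aeval_X, map_add, map_mul, finSuccEquiv_X_zero, h1, h2, h3]

lemma Psi_inj {K : Type*} [Field K] [CharZero K] (q u w : Fin 3 → K)
    (hs : ∀ z : Fin 3 → K, ∃ a b c : K, z = a • q + b • u + c • w) :
    Function.Injective (Psi q u w) :=
  (finSuccEquiv K 2).injective.comp (psi_inj q u w hs)

lemma Psi_coeff_hom {K : Type*} [Field K] (q u w : Fin 3 → K) {F : MvPolynomial (Fin 3) K} {d : ℕ}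
    (hF : F.IsHomogeneous d) (j : ℕ) (h0 : (Psi q u w F).coeff j ≠ 0) :
    ∃ e, j + e = d ∧ ((Psi q u w F).coeff j).IsHomogeneous e := by
  have hj : j ≤ d := by
    have h1 := Polynomial.le_natDegree_of_ne_zero h0
    have h2 : (Psi q u w F).natDegree = degreeOf 0 (psi q u w F) :=
      natDegree_finSuccEquiv _
    have h3 := degreeOf_le_totalDegree (psi q u w F) 0
    have h4 := (psi_hom q u w hF).totalDegree_le
    omega
  refine ⟨d - j, by omega, ?_⟩
  exact (psi_hom q u w hF).finSuccEquiv_coeff_isHomogeneous j (d - j) (by omega)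

lemma Psi_line {K : Type*} [Field K] (q u w : Fin 3 → K) (a b : K) (hab : a ≠ 0 ∨ b ≠ 0)
    (P : Ideal (MvPolynomial (Fin 3) K))
    (hP : ∀ F, F ∈ P ↔ ∀ n, eval (a • u + b • w) (homogeneousComponent n F) = 0)
    (m : ℕ) (F : MvPolynomial (Fin 3) K) (hF : F ∈ P ^ m) (j : ℕ) :
    (C b * X 0 - C a * X 1 : MvPolynomial (Fin 2) K) ^ (m - j) ∣ (Psi q u w F).coeff j := by
  apply coeff_dvd
  have hle : P.map (Psi q u w) ≤
      Ideal.span {Polynomial.X, Polynomial.C (C b * X 0 - C a * X 1 : MvPolynomial (Fin 2) K)} := by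
    rw [Ideal.map_le_iff_le_comap]
    intro F hF
    rw [Ideal.mem_comap]
    have halg : ∀ t : K, algebraMap K (Polynomial (MvPolynomial (Fin 2) K)) t
        = Polynomial.C (C t) := fun t => rfl
    rcases hab with ha | hb
    · refine mem_of_vanish _ _ (a • u + b • w) (Polynomial.C (C a⁻¹ * X 0)) ?_ F ((hP F).1 hF)
      intro k
      rw [Ideal.mem_span_pair]
      refine ⟨Polynomial.C (C (q k)), - Polynomial.C (C (a⁻¹ * w k)), ?_⟩
      have e : (C a * C a⁻¹ : MvPolynomial (Fin 2) K) = 1 := by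
        rw [← C_mul, mul_inv_cancel₀ ha, C_1]
      have e' := congrArg Polynomial.C e
      rw [Psi_X, halg]
      simp only [Pi.add_apply, Pi.smul_apply, smul_eq_mul, map_add, map_mul, map_sub,
        Polynomial.C_1] at e' ⊢
      linear_combination (Polynomial.C (C (w k)) * Polynomial.C (X 1)
        + Polynomial.C (C (u k)) * Polynomial.C (X 0)) * e'
    · refine mem_of_vanish _ _ (a • u + b • w) (Polynomial.C (C b⁻¹ * X 1)) ?_ F ((hP F).1 hF)
      intro k
      rw [Ideal.mem_span_pair]
      refine ⟨Polynomial.C (C (q k)), Polynomial.C (C (b⁻¹ * u k)), ?_⟩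
      have e : (C b * C b⁻¹ : MvPolynomial (Fin 2) K) = 1 := by
        rw [← C_mul, mul_inv_cancel₀ hb, C_1]
      have e' := congrArg Polynomial.C e
      rw [Psi_X, halg]
      simp only [Pi.add_apply, Pi.smul_apply, smul_eq_mul, map_add, map_mul, map_sub,
        Polynomial.C_1] at e' ⊢
      linear_combination (Polynomial.C (C (w k)) * Polynomial.C (X 1)
        + Polynomial.C (C (u k)) * Polynomial.C (X 0)) * e'
  have h1 : Psi q u w F ∈ (P ^ m).map (Psi q u w) := Ideal.mem_map_of_mem _ hF
  rw [Ideal.map_pow] at h1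
  exact Ideal.pow_right_mono hle m h1

lemma Psi_apex {K : Type*} [Field K] (q u w : Fin 3 → K)
    (P : Ideal (MvPolynomial (Fin 3) K))
    (hP : ∀ F, F ∈ P ↔ ∀ n, eval q (homogeneousComponent n F) = 0)
    (m : ℕ) (F : MvPolynomial (Fin 3) K) (hF : F ∈ P ^ m) (j e : ℕ)
    (h0 : (Psi q u w F).coeff j ≠ 0) (he : ((Psi q u w F).coeff j).IsHomogeneous e) : m ≤ e := by
  have hle : P.map (Psi q u w) ≤ (idealOfVars (Fin 2) K).map Polynomial.C := by
    rw [Ideal.map_le_iff_le_comap]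
    intro F hF
    rw [Ideal.mem_comap]
    refine mem_of_vanish _ _ q Polynomial.X ?_ F ((hP F).1 hF)
    intro k
    have halg : ∀ t : K, algebraMap K (Polynomial (MvPolynomial (Fin 2) K)) t
        = Polynomial.C (C t) := fun t => rfl
    rw [Psi_X, halg, add_assoc, add_sub_cancel_left]
    have hX : ∀ i : Fin 2, Polynomial.C (X i : MvPolynomial (Fin 2) K) ∈ (idealOfVars (Fin 2) K).map Polynomial.C :=
      fun i => Ideal.mem_map_of_mem _ (Ideal.subset_span ⟨i, rfl⟩)
    exact Ideal.add_mem _ (Ideal.mul_mem_left _ _ (hX 0)) (Ideal.mul_mem_left _ _ (hX 1))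
  have h1 : Psi q u w F ∈ (P ^ m).map (Psi q u w) := Ideal.mem_map_of_mem _ hF
  rw [Ideal.map_pow] at h1
  have h2 := Ideal.pow_right_mono hle m h1
  rw [← Ideal.map_pow, Ideal.mem_map_C_iff] at h2
  have h3 := (mem_pow_idealOfVars_iff m _).1 (h2 j)
  obtain ⟨x, hx⟩ := exists_coeff_ne_zero h0
  have h4 := h3 x (mem_support_iff.2 hx)
  have h5 := he.degree_eq_sum_deg_support (mem_support_iff.2 hx)
  rw [Finsupp.degree_apply] at h4
  omega

/-- the linear form with given coefficients -/
noncomputable def lin {K : Type*} [Field K] (N : Fin 3 → K) : MvPolynomial (Fin 3) K :=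
  ∑ j, C (N j) * X j

lemma lin_hom {K : Type*} [Field K] (N : Fin 3 → K) : (lin N).IsHomogeneous 1 :=
  IsHomogeneous.sum _ _ _ fun _ _ => isHomogeneous_C_mul_X _ _

lemma lin_ne {K : Type*} [Field K] (N : Fin 3 → K) (h : N ≠ 0) : lin N ≠ 0 := by
  intro h0
  apply h
  funext k
  have := congrArg (eval (Pi.single k 1)) h0
  simpa [lin, Pi.single_apply] using this

lemma lin_mem {K : Type*} [Field K] (N v : Fin 3 → K) (h : ∑ j, N j * v j = 0)
    (P : Ideal (MvPolynomial (Fin 3) K))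
    (hP : ∀ F, F ∈ P ↔ ∀ n, eval v (homogeneousComponent n F) = 0) : lin N ∈ P := by
  rw [hP]
  intro n
  rw [homogeneousComponent_of_mem (lin_hom N)]
  split_ifs
  · simpa [lin] using h
  · simp

lemma exists_line {K : Type*} [Field K] (q v : Fin 3 → K) (h0 : q ≠ 0) (h : ∀ c : K, c • q ≠ v) :
    ∃ N : Fin 3 → K, N ≠ 0 ∧ ∑ j, N j * q j = 0 ∧ ∑ j, N j * v j = 0 := by
  refine ⟨crossProduct q v, ?_, ?_, ?_⟩
  · rw [crossProduct_ne_zero_iff_linearIndependent]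
    rw [LinearIndependent.pair_iff' h0]
    exact h
  · have := dot_self_cross q v
    rw [dotProduct_comm] at this
    exact this
  · have := dot_cross_self q v
    rw [dotProduct_comm] at this
    exact this

end FatPts

theorem stmt_0 (K : Type*) [Field K] [CharZero K]
    -- `l > 2` points on a line plus one point off the line
    (l : ℕ) (hl : 2 < l)
    (p : Fin (l + 1) → Fin 3 → K) (hp0 : ∀ i, p i ≠ 0)
    (hdist : ∀ i j, i ≠ j → ∀ c : K, c • p i ≠ p j)
    (L : Fin 3 → K) (hL : L ≠ 0)
    (hon : ∀ i : Fin (l + 1), (i : ℕ) < l → ∑ j, L j * p i j = 0)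
    (hoff : ∑ j, L j * p (Fin.last l) j ≠ 0)
    -- `P i` is the homogeneous prime ideal of all forms vanishing at `p i`
    (P : Fin (l + 1) → Ideal (MvPolynomial (Fin 3) K))
    (hP : ∀ i F, F ∈ P i ↔ ∀ n, eval (p i) (homogeneousComponent n F) = 0)
    -- the uniform fat point ideal `I^{(m)} = P_1^m ∩ ⋯ ∩ P_{l+1}^m`
    (m : ℕ) (hm : 1 ≤ m) (hdvd : l * (l - 1) ∣ m)
    (Im : Ideal (MvPolynomial (Fin 3) K)) (hIm : Im = ⨅ i, P i ^ m) :
    (∀ d, d < 2 * m - m / l → hdim Im d = 0) ∧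
    hdim Im (2 * m - m / l) = 1 ∧
    sInf {d | hdim Im d ≠ 0} = 2 * m - m / l := by
  have hl0 : 0 < l := by omega
  obtain ⟨b, hb⟩ : l ∣ m := (Dvd.intro _ rfl).trans hdvd
  have hb1 : 1 ≤ b := by
    rcases Nat.eq_zero_or_pos b with h | h
    · subst h; omega
    · exact h
  have hdiv : m / l = b := by rw [hb]; exact Nat.mul_div_cancel_left b hl0
  rw [hdiv]
  have hbm : b ≤ m := by rw [hb]; exact Nat.le_mul_of_pos_left b hl0
  set q := p (Fin.last l) with hq
  set i0 : Fin l := ⟨0, by omega⟩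
  set i1 : Fin l := ⟨1, by omega⟩
  set u := p i0.castSucc with hu
  set w := p i1.castSucc with hw
  have hon' : ∀ i : Fin l, ∑ j, L j * p i.castSucc j = 0 := fun i => hon _ (by simp)
  obtain ⟨hs, hs2⟩ := FatPts.exists_coords q u w L (hon' i0) (hon' i1) hoff (hp0 _)
    (hdist _ _ (by simp [i0, i1]))
  choose α β hαβ using fun i : Fin l => hs2 _ (hon' i)
  have hne : ∀ i, α i ≠ 0 ∨ β i ≠ 0 := by
    intro i
    by_contra! h
    apply hp0 i.castSucc
    rw [hαβ i, h.1, h.2]; simp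
  set lam : Fin l → MvPolynomial (Fin 2) K := fun i => C (β i) * X 0 - C (α i) * X 1 with hlam
  have hrel : ∀ i k, i ≠ k → IsRelPrime (lam i) (lam k) := by
    intro i k hik
    apply FatPts.relprime
    apply FatPts.coords_det u w
    · rw [← hαβ i]; exact hp0 _
    · rw [← hαβ i, ← hαβ k]; exact hdist _ _ (by simpa using hik)
  -- the structure of forms of low degree
  have main : ∀ d, d ≤ 2 * m - b → ∀ F ∈ degComp Im d, F ≠ 0 → d = 2 * m - b ∧
      ∃ c : K, FatPts.Psi q u w F =
        Polynomial.monomial (m - b) (C c * ∏ i, lam i ^ b) := by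
    intro d hd F hF hF0
    obtain ⟨hF1, hF2⟩ := hF
    have hF1 : F ∈ Im := hF1
    have hF2 : F.IsHomogeneous d := hF2
    have hmem : ∀ i, F ∈ P i ^ m := by
      rw [hIm] at hF1
      exact fun i => (Ideal.mem_iInf.1 hF1) i
    have step : ∀ j, (FatPts.Psi q u w F).coeff j ≠ 0 → d = 2 * m - b ∧ j = m - b ∧
        ∃ c : K, (FatPts.Psi q u w F).coeff j = C c * ∏ i, lam i ^ b := by
      intro j hj
      obtain ⟨e, hje, he⟩ := FatPts.Psi_coeff_hom q u w hF2 j hj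
      refine FatPts.core l b m d j e hl hb1 hb lam hrel (fun i => FatPts.lam_hom _ _)
        (fun i => FatPts.lam_ne _ _ (hne i)) hd _ he hje hj ?_ ?_
      · exact FatPts.Psi_apex q u w (P (Fin.last l)) (hP _) m F (hmem _) j e hj he
      · intro i
        exact FatPts.Psi_line q u w (α i) (β i) (hne i) (P i.castSucc)
          (by rw [← hαβ i]; exact hP _) m F (hmem _) j
    have hΨ0 : FatPts.Psi q u w F ≠ 0 := by
      rw [Ne, map_eq_zero_iff _ (FatPts.Psi_inj q u w hs)]; exact hF0
    have hlead : (FatPts.Psi q u w F).coeff (FatPts.Psi q u w F).natDegree ≠ 0 := by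
      rw [Polynomial.coeff_natDegree]; exact Polynomial.leadingCoeff_ne_zero.2 hΨ0
    obtain ⟨h1, h2, c, hc⟩ := step _ hlead
    refine ⟨h1, c, ?_⟩
    ext1 j
    rw [Polynomial.coeff_monomial]
    split_ifs with hj
    · rw [← hc, ← hj, h2]
    · by_contra h
      exact hj (step j h).2.1.symm
  -- the generator
  choose N hN0 hNq hNi using fun i : Fin l =>
    FatPts.exists_line q (p i.castSucc) (hp0 _) (hdist _ _ (Fin.castSucc_ne_last i).symm)
  set G : MvPolynomial (Fin 3) K :=
    FatPts.lin L ^ (m - b) * ∏ i, FatPts.lin (N i) ^ b with hG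
  have hG0 : G ≠ 0 := mul_ne_zero (pow_ne_zero _ (FatPts.lin_ne _ hL))
    (Finset.prod_ne_zero_iff.2 fun i _ => pow_ne_zero _ (FatPts.lin_ne _ (hN0 i)))
  have hGh : G.IsHomogeneous (2 * m - b) := by
    have h1 := (FatPts.lin_hom L).pow (m - b)
    have h2 := IsHomogeneous.prod Finset.univ (fun i => FatPts.lin (N i) ^ b) (fun _ => 1 * b)
      (fun i _ => (FatPts.lin_hom (N i)).pow b)
    have h3 := h1.mul h2
    have e : 1 * (m - b) + ∑ _i : Fin l, 1 * b = 2 * m - b := by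
      simp only [Finset.sum_const, Finset.card_univ, Fintype.card_fin, smul_eq_mul, one_mul, ← hb]
      omega
    rwa [e] at h3
  have hGm : G ∈ Im := by
    rw [hIm, Ideal.mem_iInf]
    intro i
    refine Fin.lastCases ?_ (fun i => ?_) i
    · apply Ideal.mul_mem_left
      rw [Finset.prod_pow]
      have h1 : ∏ i, FatPts.lin (N i) ∈ P (Fin.last l) ^ l := by
        have := Ideal.prod_mem_prod (s := Finset.univ) (I := fun _ : Fin l => P (Fin.last l))
          (x := fun i => FatPts.lin (N i))
          (fun i _ => FatPts.lin_mem (N i) q (hNq i) _ (hP _))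
        simpa using this
      have := Ideal.pow_mem_pow h1 b
      rwa [← pow_mul, ← hb] at this
    · rw [hG, ← Finset.mul_prod_erase Finset.univ _ (Finset.mem_univ i), ← mul_assoc]
      apply Ideal.mul_mem_right
      have h1 := Ideal.pow_mem_pow (FatPts.lin_mem L _ (hon' i) _ (hP i.castSucc)) (m - b)
      have h2 := Ideal.pow_mem_pow (FatPts.lin_mem (N i) _ (hNi i) _ (hP i.castSucc)) b
      have h3 := Ideal.mul_mem_mul h1 h2
      rwa [← pow_add, Nat.sub_add_cancel hbm] at h3
  have hGD : G ∈ degComp Im (2 * m - b) := ⟨hGm, hGh⟩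
  have A : ∀ d, d < 2 * m - b → hdim Im d = 0 := by
    intro d hd
    have : degComp Im d = ⊥ := by
      rw [Submodule.eq_bot_iff]
      intro F hF
      by_contra hF0
      have := (main d hd.le F hF hF0).1
      omega
    rw [hdim, this, finrank_bot]
  have B : hdim Im (2 * m - b) = 1 := by
    refine finrank_eq_one (⟨G, hGD⟩ : degComp Im (2 * m - b)) ?_ ?_
    · intro h; exact hG0 (congrArg Subtype.val h)
    · rintro ⟨F, hF⟩
      by_cases hF0 : F = 0
      · exact ⟨0, by ext1; simp [hF0]⟩
      obtain ⟨-, c, hc⟩ := main _ le_rfl F hF hF0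
      obtain ⟨-, c', hc'⟩ := main _ le_rfl G hGD hG0
      have hc0 : c' ≠ 0 := by
        rintro rfl
        rw [C_0, zero_mul, map_zero, map_eq_zero_iff _ (FatPts.Psi_inj q u w hs)] at hc'
        exact hG0 hc'
      refine ⟨c / c', Subtype.ext ?_⟩
      apply FatPts.Psi_inj q u w hs
      change FatPts.Psi q u w ((c / c') • G) = _
      rw [map_smul, hc, hc', Polynomial.smul_monomial, ← smul_mul_assoc, smul_eq_C_mul,
        ← C_mul, div_mul_cancel₀ _ hc0]
  refine ⟨A, B, ?_⟩
  apply le_antisymm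
  · exact Nat.sInf_le (by simp [B])
  · refine le_csInf ⟨2 * m - b, by simp [B]⟩ fun d hd => ?_
    by_contra h
    exact hd (A d (by omega))
end

section
/- For every integer m ≥ 1 and every degree d with 2m ≤ d < lm, setting q = ⌈(lm − d)/(l − 1)⌉, one has dim_K (I^{(m)})_d = [ (d−q)² + 3(d−q) − l·((m−q)² + (m−q)) − (m² + m) ] / 2 + 1. -/
open MvPolynomial Filter

lemma finrank_homog2 (K : Type*) [Field K] (e : ℕ) :
    Module.finrank K (homogeneousSubmodule (Fin 2) K e) = e + 1 := by
  have h1 : homogeneousSubmodule (Fin 2) K e = Submodule.span K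
      (Set.range (fun i : Fin (e+1) => (X 0 : MvPolynomial (Fin 2) K) ^ (i:ℕ) * X 1 ^ (e - i))) := by
    apply le_antisymm
    · intro f hf
      rw [mem_homogeneousSubmodule] at hf
      rw [f.as_sum]
      refine Submodule.sum_mem _ fun v hv => ?_
      have hd := hf (by simpa using hv : coeff v f ≠ 0)
      have hd' : v 0 + v 1 = e := by
        rw [← hd]; simp [Finsupp.weight_apply, Finsupp.sum_fintype]
      rw [monomial_eq, Finsupp.prod_fintype _ _ (by simp), ← smul_eq_C_mul, Fin.prod_univ_two]
      refine Submodule.smul_mem _ _ (Submodule.subset_span ⟨⟨v 0, by omega⟩, ?_⟩)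
      simp only
      congr 2
      omega
    · rw [Submodule.span_le]
      rintro _ ⟨i, rfl⟩
      simp only [SetLike.mem_coe, mem_homogeneousSubmodule]
      have := (isHomogeneous_X_pow (R := K) (0 : Fin 2) (i:ℕ)).mul (isHomogeneous_X_pow (R := K) (1 : Fin 2) (e-i))
      rwa [show (i:ℕ) + (e - i) = e by omega] at this
  have h2 : LinearIndependent K (fun i : Fin (e+1) => (X 0 : MvPolynomial (Fin 2) K) ^ (i:ℕ) * X 1 ^ (e - i)) := by
    have := (basisMonomials (Fin 2) K).linearIndependent.comp
      (fun i : Fin (e+1) => Finsupp.single (0 : Fin 2) (i:ℕ) + Finsupp.single 1 (e - i)) (by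
        intro i j hij
        have := DFunLike.congr_fun hij 0
        simp at this
        exact Fin.ext this)
    have hfun : (fun i : Fin (e+1) => (X 0 : MvPolynomial (Fin 2) K) ^ (i:ℕ) * X 1 ^ (e - i)) =
        (basisMonomials (Fin 2) K) ∘
          (fun i : Fin (e+1) => Finsupp.single (0 : Fin 2) (i:ℕ) + Finsupp.single 1 (e - i)) := by
      funext i
      simp [X_pow_eq_monomial, monomial_mul]
    rw [hfun]
    exact this
  rw [h1, finrank_span_eq_card h2, Fintype.card_fin]

lemma homog_factor {K : Type*} [Field K] {G f : MvPolynomial (Fin 2) K} {k n : ℕ}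
    (hG : G.IsHomogeneous k) (hf : f.IsHomogeneous n) (hdvd : G ∣ f) (hf0 : f ≠ 0) :
    k ≤ n ∧ ∃ h : MvPolynomial (Fin 2) K, h.IsHomogeneous (n - k) ∧ f = G * h := by
  obtain ⟨h, rfl⟩ := hdvd
  let := MvPolynomial.gradedAlgebra (σ := Fin 2) (R := K)
  have hG' : G ∈ homogeneousSubmodule (Fin 2) K k := hG
  have key : homogeneousComponent n (G * h) = G * h := homogeneousComponent_eq_self hf
  have e : ∀ (n : ℕ) (x : MvPolynomial (Fin 2) K),
      (DirectSum.decompose (homogeneousSubmodule (Fin 2) K) x n : MvPolynomial (Fin 2) K) = homogeneousComponent n x :=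
    fun n x => decomposition.decompose'_apply x n
  rw [← e] at key
  by_cases hkn : k ≤ n
  · refine ⟨hkn, homogeneousComponent (n-k) h, homogeneousComponent_isHomogeneous _ _, ?_⟩
    rw [DirectSum.coe_decompose_mul_of_left_mem_of_le _ hG' hkn] at key
    rw [← key, e]
  · rw [DirectSum.coe_decompose_mul_of_left_mem_of_not_le _ hG' hkn] at key
    exact absurd key.symm hf0

lemma mem_span_pair_pow {S : Type*} [CommRing S] (a : S) (m : ℕ) (f : Polynomial S) :
    f ∈ (Ideal.span {Polynomial.C a, Polynomial.X}) ^ m ↔ ∀ j, a ^ (m - j) ∣ f.coeff j := by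
  constructor
  · induction m generalizing f with
    | zero => simp
    | succ m ih =>
      rw [pow_succ]
      intro hf
      refine Submodule.mul_induction_on hf ?_ ?_
      · intro x hx y hy j
        rw [Ideal.mem_span_pair] at hy
        obtain ⟨u, v, rfl⟩ := hy
        have hx' := ih x hx
        have h1 : x * (u * Polynomial.C a + v * Polynomial.X) = (x * u) * Polynomial.C a + (x * v) * Polynomial.X := by ring
        have h2 : ∀ w : Polynomial S, ∀ j, a ^ (m - j) ∣ (x * w).coeff j := by
          intro w j
          rw [Polynomial.coeff_mul]
          refine Finset.dvd_sum fun c hc => ?_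
          rw [Finset.HasAntidiagonal.mem_antidiagonal] at hc
          exact Dvd.dvd.mul_right ((pow_dvd_pow a (by omega)).trans (hx' c.1)) _
        rw [h1, Polynomial.coeff_add, Polynomial.coeff_mul_C]
        refine dvd_add ?_ ?_
        · refine (pow_dvd_pow a (by omega : m + 1 - j ≤ (m - j) + 1)).trans ?_
          rw [pow_succ]
          exact mul_dvd_mul_right (h2 u j) a
        · cases j with
          | zero => simp
          | succ j =>
            rw [Polynomial.coeff_mul_X]
            simpa using h2 v j
      · intro x y hx hy j
        rw [Polynomial.coeff_add]
        exact dvd_add (hx j) (hy j)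
  · intro h
    rw [f.as_sum_range_C_mul_X_pow]
    refine Ideal.sum_mem _ fun j _ => ?_
    obtain ⟨b, hb⟩ := h j
    rw [hb, map_mul, map_pow, mul_assoc, mul_left_comm]
    refine Ideal.mul_mem_left _ _ ?_
    have h1 : Polynomial.C a ∈ Ideal.span {Polynomial.C a, Polynomial.X} := Ideal.subset_span (by simp)
    have h2 : Polynomial.X ∈ Ideal.span {Polynomial.C a, Polynomial.X} := Ideal.subset_span (by simp)
    have h3 := Ideal.mul_mem_mul (Ideal.pow_mem_pow h1 (m-j)) (Ideal.pow_mem_pow h2 j)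
    rw [← pow_add] at h3
    have := Ideal.pow_le_pow_right (by omega : m ≤ m - j + j) h3
    exact this

/-- the parametrised-line map -/
noncomputable def th {K : Type*} [Field K] {n : ℕ} (v : Fin n → K) :
    MvPolynomial (Fin n) K →ₐ[K] Polynomial K :=
  aeval (fun i => Polynomial.C (v i) * Polynomial.X)

lemma th_of_homog {K : Type*} [Field K] {n : ℕ} (v : Fin n → K) (F : MvPolynomial (Fin n) K) (k : ℕ)
    (hF : F.IsHomogeneous k) : th v F = Polynomial.C (eval v F) * Polynomial.X ^ k := by
  conv_lhs => rw [F.as_sum]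
  conv_rhs => rw [F.as_sum]
  rw [map_sum, map_sum, map_sum, Finset.sum_mul]
  refine Finset.sum_congr rfl fun w hw => ?_
  have hd := hF (by simpa using hw : coeff w F ≠ 0)
  have hd' : ∑ i, w i = k := by
    rw [← hd]; simp [Finsupp.weight_apply, Finsupp.sum_fintype]
  rw [th, aeval_monomial, eval_monomial, Finsupp.prod_fintype _ _ (by simp), Finsupp.prod_fintype _ _ (by simp)]
  simp only [mul_pow, Finset.prod_mul_distrib, map_mul, map_prod, map_pow, Finset.prod_pow_eq_pow_sum, hd', mul_assoc]
  rfl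

lemma th_eq_zero_iff {K : Type*} [Field K] {n : ℕ} (v : Fin n → K) (F : MvPolynomial (Fin n) K) :
    th v F = 0 ↔ ∀ k, eval v (homogeneousComponent k F) = 0 := by
  have h : th v F = ∑ k ∈ Finset.range (F.totalDegree + 1),
      Polynomial.C (eval v (homogeneousComponent k F)) * Polynomial.X ^ k := by
    conv_lhs => rw [← sum_homogeneousComponent F]
    rw [map_sum]
    exact Finset.sum_congr rfl fun k _ => th_of_homog v _ k (homogeneousComponent_isHomogeneous _ _)
  constructor
  · intro h0 k
    by_cases hk : k < F.totalDegree + 1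
    · rw [h] at h0
      have := congrArg (fun p => Polynomial.coeff p k) h0
      simpa [Polynomial.finsetSum_coeff, Polynomial.coeff_C_mul, Polynomial.coeff_X_pow, hk, Nat.lt_succ_iff.mp hk] using this
    · rw [homogeneousComponent_eq_zero _ _ (by omega)]; simp
  · intro h0
    rw [h]
    simp [h0]

/-- linear form vanishing at `(a,b)` -/
noncomputable def lf {K : Type*} [Field K] (a b : K) : MvPolynomial (Fin 2) K := C b * X 0 - C a * X 1

lemma lf_homog {K : Type*} [Field K] (a b : K) : (lf a b).IsHomogeneous 1 :=
  (isHomogeneous_C_mul_X _ _).sub (isHomogeneous_C_mul_X _ _)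

lemma th2_eq_zero_iff {K : Type*} [Field K] (v : Fin 2 → K) (hv : v ≠ 0) (f : MvPolynomial (Fin 2) K) :
    th v f = 0 ↔ lf (v 0) (v 1) ∣ f := by
  constructor
  · intro h
    obtain ⟨c, d, hcd⟩ : ∃ c d : K, c * v 0 + d * v 1 = 1 := by
      by_cases h0 : v 0 = 0
      · have h1 : v 1 ≠ 0 := fun h1 => hv (by ext i; fin_cases i <;> assumption)
        exact ⟨0, (v 1)⁻¹, by simp [h1]⟩
      · exact ⟨(v 0)⁻¹, 0, by simp [h0]⟩
    have hcd' : (C c * C (v 0) + C d * C (v 1) : MvPolynomial (Fin 2) K) = 1 := by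
      rw [← C_mul, ← C_mul, ← C_add, hcd, C_1]
    let g : Polynomial K →ₐ[K] MvPolynomial (Fin 2) K := Polynomial.aeval (C c * X 0 + C d * X 1)
    let π := Ideal.Quotient.mkₐ K (Ideal.span {lf (v 0) (v 1)})
    have hcomp : (π.comp (g.comp (th v))) = π := by
      apply MvPolynomial.algHom_ext
      intro i
      have : g (th v (X i)) = C (v i) * (C c * X 0 + C d * X 1) := by
        simp [th, g, MvPolynomial.algebraMap_eq]
      simp only [AlgHom.comp_apply, this]
      simp only [π, Ideal.Quotient.mkₐ_eq_mk]
      rw [Ideal.Quotient.eq, Ideal.mem_span_singleton]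
      fin_cases i
      · refine ⟨- C d, ?_⟩
        simp only [lf]
        simp
        linear_combination X 0 * hcd'
      · refine ⟨C c, ?_⟩
        simp only [lf]
        simp
        linear_combination X 1 * hcd'
    have := DFunLike.congr_fun hcomp f
    simp only [AlgHom.comp_apply, h, map_zero] at this
    have := this.symm
    simp only [π, Ideal.Quotient.mkₐ_eq_mk] at this
    rwa [Ideal.Quotient.eq_zero_iff_mem, Ideal.mem_span_singleton] at this
  · rintro ⟨g, rfl⟩
    rw [map_mul]
    have : th v (lf (v 0) (v 1)) = 0 := by
      simp only [th, lf, map_sub, map_mul, aeval_X, MvPolynomial.aeval_C, Polynomial.algebraMap_eq]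
      ring
    rw [this, zero_mul]

lemma lf_relPrime {K : Type*} [Field K] (a b c d : K) (h : a * d - b * c ≠ 0) :
    IsRelPrime (lf a b) (lf c d) := by
  intro u hu hv
  have hC : (C (a*d-b*c)⁻¹ * (C a * C d - C b * C c) : MvPolynomial (Fin 2) K) = 1 := by
    rw [← C_mul, ← C_mul, ← C_sub, ← C_mul, inv_mul_cancel₀ h, C_1]
  have h0 : u ∣ (X 0 : MvPolynomial (Fin 2) K) := by
    have : (X 0 : MvPolynomial (Fin 2) K) = C (a*d-b*c)⁻¹ * (C a * lf c d - C c * lf a b) := by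
      simp only [lf]
      linear_combination (- X 0) * hC
    rw [this]
    exact Dvd.dvd.mul_left (dvd_sub (Dvd.dvd.mul_left hv _) (Dvd.dvd.mul_left hu _)) _
  have h1 : u ∣ (X 1 : MvPolynomial (Fin 2) K) := by
    have : (X 1 : MvPolynomial (Fin 2) K) = C (a*d-b*c)⁻¹ * (C b * lf c d - C d * lf a b) := by
      simp only [lf]
      linear_combination (- X 1) * hC
    rw [this]
    exact Dvd.dvd.mul_left (dvd_sub (Dvd.dvd.mul_left hv _) (Dvd.dvd.mul_left hu _)) _
  have hirr : Irreducible (X 0 : MvPolynomial (Fin 2) K) := MvPolynomial.X_prime.irreducible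
  rcases hirr.dvd_iff.mp h0 with hu | hu
  · exact hu
  · exfalso
    have := hu.dvd.trans h1
    rw [MvPolynomial.X_dvd_X] at this
    simp at this

lemma exists_coord {K : Type*} [Field K] (L p0 : Fin 3 → K) (h : ∑ j, L j * p0 j ≠ 0) :
    ∃ M N : Matrix (Fin 3) (Fin 3) K, M * N = 1 ∧ N * M = 1 ∧
      M.mulVec p0 = Pi.single 0 1 ∧ ∀ v : Fin 3 → K, ∑ j, L j * v j = 0 → M.mulVec v 0 = 0 := by
  let φ : (Fin 3 → K) →ₗ[K] K := ∑ j, L j • LinearMap.proj j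
  have hφ : ∀ v, φ v = ∑ j, L j * v j := by
    intro v; simp [φ]
  have hφ0 : φ p0 ≠ 0 := by rwa [hφ]
  have hrk : Module.finrank K (LinearMap.ker φ) = 2 := by
    have h1 := LinearMap.finrank_range_add_finrank_ker φ
    have h2 : LinearMap.range φ = ⊤ := by
      rw [LinearMap.range_eq_top]
      intro c
      exact ⟨(c / φ p0) • p0, by simp [hφ0]⟩
    rw [h2, finrank_top] at h1
    simp at h1
    omega
  let b0 := Module.finBasisOfFinrankEq K (LinearMap.ker φ) hrk
  let b : Module.Basis (Fin 3) K (Fin 3 → K) := Module.Basis.mkFinCons p0 b0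
    (by
      intro c x hx hcx
      have := congrArg φ hcx
      rw [LinearMap.mem_ker] at hx
      simpa [hx, hφ0] using this)
    (by
      intro z
      refine ⟨-(φ z / φ p0), ?_⟩
      rw [LinearMap.mem_ker]
      simp [hφ0])
  have hb0 : b 0 = p0 := by simp [b, Module.Basis.coe_mkFinCons]
  have hbs : ∀ i : Fin 2, φ (b i.succ) = 0 := by
    intro i
    have : b i.succ = b0 i := by simp [b, Module.Basis.coe_mkFinCons]
    rw [this]
    exact (b0 i).2
  refine ⟨LinearMap.toMatrix' b.equivFun.toLinearMap, LinearMap.toMatrix' b.equivFun.symm.toLinearMap,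
    ?_, ?_, ?_, ?_⟩
  · rw [← LinearMap.toMatrix'_comp]; simp
  · rw [← LinearMap.toMatrix'_comp]; simp
  · rw [LinearMap.toMatrix'_mulVec, ← hb0]
    simp
    ext i
    simp [Finsupp.single_apply, Pi.single_apply, eq_comm]
  · intro v hv
    rw [← hφ] at hv
    rw [LinearMap.toMatrix'_mulVec]
    have h1 := b.sum_equivFun v
    rw [← h1, map_sum, Fin.sum_univ_succ] at hv
    simp only [map_smul, hbs, hb0] at hv
    simpa [hφ0] using hv

/-- the parametrised-line map on `K[x,y][z]` -/
noncomputable def chi {K : Type*} [Field K] (w : Fin 3 → K) :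
    Polynomial (MvPolynomial (Fin 2) K) →+* Polynomial K :=
  Polynomial.eval₂RingHom (th (fun i : Fin 2 => w i.succ) : MvPolynomial (Fin 2) K →+* Polynomial K)
    (Polynomial.C (w 0) * Polynomial.X)

lemma exists_Phi {K : Type*} [Field K] (M N : Matrix (Fin 3) (Fin 3) K) (hMN : M * N = 1)
    (hNM : N * M = 1) :
    ∃ Φ : MvPolynomial (Fin 3) K ≃ₐ[K] Polynomial (MvPolynomial (Fin 2) K),
      (∀ v f, th v (Φ.symm f) = chi (M.mulVec v) f) ∧
      (∀ F d i j, F.IsHomogeneous d → i + j = d → ((Φ F).coeff i).IsHomogeneous j) ∧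
      (∀ F d i, F.IsHomogeneous d → d < i → (Φ F).coeff i = 0) ∧
      (∀ f a j, f.IsHomogeneous a →
        (Φ.symm (Polynomial.C f * Polynomial.X ^ j)).IsHomogeneous (a + j)) := by
  let ψ : MvPolynomial (Fin 3) K ≃ₐ[K] MvPolynomial (Fin 3) K :=
    AlgEquiv.ofAlgHom (bind₁ N.toMvPolynomial) (bind₁ M.toMvPolynomial)
      (by
        apply MvPolynomial.algHom_ext
        intro i
        simp [← Matrix.toMvPolynomial_mul, hMN])
      (by
        apply MvPolynomial.algHom_ext
        intro i
        simp [← Matrix.toMvPolynomial_mul, hNM])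
  have hψ : ∀ F, ψ F = bind₁ N.toMvPolynomial F := fun F => rfl
  have hψs : ∀ F, ψ.symm F = bind₁ M.toMvPolynomial F := fun F => rfl
  have hψh : ∀ F d, F.IsHomogeneous d → (ψ F).IsHomogeneous d := by
    intro F d hF
    rw [hψ]
    have := hF.aeval N.toMvPolynomial (n := 1) (fun i => N.toMvPolynomial_isHomogeneous i)
    rwa [one_mul] at this
  have hψsh : ∀ F d, F.IsHomogeneous d → (ψ.symm F).IsHomogeneous d := by
    intro F d hF
    rw [hψs]
    have := hF.aeval M.toMvPolynomial (n := 1) (fun i => M.toMvPolynomial_isHomogeneous i)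
    rwa [one_mul] at this
  have hX0 : (finSuccEquiv K 2).symm Polynomial.X = X 0 := by
    rw [AlgEquiv.symm_apply_eq, finSuccEquiv_X_zero]
  have hCf : ∀ f, (finSuccEquiv K 2).symm (Polynomial.C f) = rename Fin.succ f := by
    intro f
    rw [AlgEquiv.symm_apply_eq]
    induction f using MvPolynomial.induction_on with
    | C r => simp [finSuccEquiv_apply]
    | add p q hp hq => simp only [map_add, hp, hq]
    | mul_X p i hp => simp only [map_mul, hp, rename_X, finSuccEquiv_X_succ]
  refine ⟨ψ.trans (finSuccEquiv K 2), ?_, ?_, ?_, ?_⟩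
  · intro v f
    have hthM : ∀ i, th v (M.toMvPolynomial i) = Polynomial.C (M.mulVec v i) * Polynomial.X := by
      intro i
      rw [th_of_homog v _ 1 (M.toMvPolynomial_isHomogeneous i), Matrix.toMvPolynomial_eval_eq_apply, pow_one]
    change th v (ψ.symm ((finSuccEquiv K 2).symm f)) = _
    induction f using Polynomial.induction_on' with
    | add p q hp hq => simp only [map_add, hp, hq]
    | monomial n a =>
      rw [← Polynomial.C_mul_X_pow_eq_monomial, map_mul, map_pow, hX0, hCf, map_mul, map_pow, map_mul, map_pow,
        map_mul, map_pow]
      congr 1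
      · simp only [chi, Polynomial.coe_eval₂RingHom, Polynomial.eval₂_C]
        rw [hψs, bind₁_rename]
        have : ((th v).comp (bind₁ (M.toMvPolynomial ∘ Fin.succ))) = th (fun i : Fin 2 => M.mulVec v i.succ) := by
          apply MvPolynomial.algHom_ext
          intro i
          simp only [AlgHom.comp_apply, bind₁_X_right, Function.comp, hthM]
          simp [th]
        exact DFunLike.congr_fun this a
      · rw [hψs, bind₁_X_right, hthM]
        simp [chi]
  · intro F d i j hF hij
    exact (hψh F d hF).finSuccEquiv_coeff_isHomogeneous i j hij
  · intro F d i hF hi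
    ext u
    change coeff u (((finSuccEquiv K 2) (ψ F)).coeff i) = _
    rw [finSuccEquiv_coeff_coeff, coeff_zero]
    apply (hψh F d hF).coeff_eq_zero
    simp [Finsupp.degree_eq_sum, Fin.sum_univ_succ]
    omega
  · intro f a j hf
    change (ψ.symm ((finSuccEquiv K 2).symm _)).IsHomogeneous _
    apply hψsh
    rw [map_mul, map_pow, hX0, hCf]
    exact hf.rename_isHomogeneous.mul (isHomogeneous_X_pow _ _)

lemma chi_on {K : Type*} [Field K] (w : Fin 3 → K) (h0 : w 0 = 0) (hw : w ≠ 0)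
    (f : Polynomial (MvPolynomial (Fin 2) K)) :
    chi w f = 0 ↔ f ∈ Ideal.span {Polynomial.C (lf (w 1) (w 2)), Polynomial.X} := by
  have h1 : chi w f = th (fun i : Fin 2 => w i.succ) (f.coeff 0) := by
    simp only [chi, h0, map_zero, zero_mul, Polynomial.coe_eval₂RingHom]
    rw [Polynomial.eval₂_at_zero]
    rfl
  rw [h1, th2_eq_zero_iff, ← pow_one (Ideal.span _), mem_span_pair_pow]
  · constructor
    · intro h j
      cases j with
      | zero => simpa using h
      | succ j => simp
    · intro h
      simpa using h 0
  · intro h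
    apply hw
    ext i
    refine Fin.cases h0 (fun i => congrFun h i) i

lemma chi_off {K : Type*} [Field K] (f : Polynomial (MvPolynomial (Fin 2) K)) :
    chi (Pi.single 0 1) f = 0 ↔ f ∈ (idealOfVars (Fin 2) K).map Polynomial.C := by
  rw [Ideal.mem_map_C_iff]
  have h1 : chi (Pi.single 0 1) f = f.map (constantCoeff : MvPolynomial (Fin 2) K →+* K) := by
    simp only [chi, Polynomial.coe_eval₂RingHom, Polynomial.map]
    have : ((th (fun i : Fin 2 => (Pi.single 0 1 : Fin 3 → K) i.succ) : MvPolynomial (Fin 2) K →ₐ[K] _) : MvPolynomial (Fin 2) K →+* Polynomial K)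
        = Polynomial.C.comp constantCoeff := by
      apply MvPolynomial.ringHom_ext
      · intro r; simp [th]
      · intro i; simp [th]
    rw [this]
    simp
  rw [h1, Polynomial.ext_iff]
  refine forall_congr' fun j => ?_
  rw [← pow_one (idealOfVars (Fin 2) K), mem_pow_idealOfVars_iff']
  simp [Polynomial.coeff_map, Finsupp.degree_eq_zero_iff, constantCoeff_eq]

lemma dim_core {K : Type*} [Field K]
    (Φ : MvPolynomial (Fin 3) K ≃ₐ[K] Polynomial (MvPolynomial (Fin 2) K))
    (hΦ1 : ∀ F d i j, F.IsHomogeneous d → i + j = d → ((Φ F).coeff i).IsHomogeneous j)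
    (hΦ2 : ∀ F d i, F.IsHomogeneous d → d < i → (Φ F).coeff i = 0)
    (hΦ3 : ∀ f a j, f.IsHomogeneous a →
        (Φ.symm (Polynomial.C f * Polynomial.X ^ j)).IsHomogeneous (a + j))
    (l m d q : ℕ) (G : MvPolynomial (Fin 2) K) (hG : G.IsHomogeneous l) (hG0 : G ≠ 0)
    (D : Submodule K (MvPolynomial (Fin 3) K))
    (hD : ∀ F, F ∈ D ↔ F.IsHomogeneous d ∧
      (∀ j, (Φ F).coeff j ∈ idealOfVars (Fin 2) K ^ m) ∧ ∀ j, G ^ (m - j) ∣ (Φ F).coeff j)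
    (hmd : m ≤ d)
    (hq1 : ∀ j, l * (m - j) ≤ d - j → q ≤ j)
    (hq2 : ∀ j, q ≤ j → j ≤ d - m → l * (m - j) ≤ d - j) :
    Module.finrank K D = ∑ t : Fin (d - m + 1 - q), (d - (q + t) - l * (m - (q + t)) + 1) := by
  let W : Fin (d - m + 1 - q) → Submodule K (MvPolynomial (Fin 2) K) := fun t =>
    homogeneousSubmodule (Fin 2) K (d - (q + t) - l * (m - (q + t)))
  let T : (∀ t, W t) →ₗ[K] MvPolynomial (Fin 3) K :=
    { toFun := fun g => ∑ t : Fin (d - m + 1 - q), Φ.symm (Polynomial.C (G ^ (m - (q + (t:ℕ))) * (g t : MvPolynomial (Fin 2) K))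
          * Polynomial.X ^ (q + (t:ℕ)))
      map_add' := by
        intro g h
        rw [← Finset.sum_add_distrib]
        refine Finset.sum_congr rfl fun t _ => ?_
        rw [← map_add]
        congr 1
        simp only [Pi.add_apply, Submodule.coe_add, mul_add, map_add, add_mul]
      map_smul' := by
        intro c g
        rw [RingHom.id_apply, Finset.smul_sum]
        refine Finset.sum_congr rfl fun t _ => ?_
        rw [← map_smul]
        congr 1
        simp only [Pi.smul_apply, Submodule.coe_smul, mul_smul_comm]
        rw [← Polynomial.smul_C, smul_mul_assoc] }
  have hT : ∀ g, T g = ∑ t : Fin (d - m + 1 - q), Φ.symm (Polynomial.C (G ^ (m - (q + (t:ℕ))) * (g t : MvPolynomial (Fin 2) K))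
          * Polynomial.X ^ (q + (t:ℕ))) := fun g => rfl
  have hc : ∀ g j, (Φ (T g)).coeff j =
      ∑ t : Fin (d - m + 1 - q), if j = q + (t:ℕ) then G ^ (m - (q + (t:ℕ))) * (g t : MvPolynomial (Fin 2) K) else 0 := by
    intro g j
    rw [hT, map_sum, Polynomial.finsetSum_coeff]
    refine Finset.sum_congr rfl fun t _ => ?_
    rw [AlgEquiv.apply_symm_apply, Polynomial.coeff_C_mul_X_pow]
  have hc1 : ∀ g (t : Fin (d - m + 1 - q)), (Φ (T g)).coeff (q + t) =
      G ^ (m - (q + (t:ℕ))) * (g t : MvPolynomial (Fin 2) K) := by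
    intro g t
    rw [hc, Finset.sum_eq_single t]
    · simp
    · intro s _ hs
      rw [if_neg]
      intro h
      exact hs (Fin.ext (by omega))
    · simp
  have hc2 : ∀ g j, (∀ t : Fin (d - m + 1 - q), j ≠ q + t) → (Φ (T g)).coeff j = 0 := by
    intro g j hj
    rw [hc]
    exact Finset.sum_eq_zero fun t _ => if_neg (hj t)
  have hGh : ∀ k, (G ^ k).IsHomogeneous (l * k) := fun k => hG.pow k
  have hTh : ∀ (g : ∀ t, W t) (t : Fin (d - m + 1 - q)),
      (G ^ (m - (q + (t:ℕ))) * (g t : MvPolynomial (Fin 2) K)).IsHomogeneous (d - (q + t)) := by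
    intro g t
    have h1 := (hGh (m - (q + (t:ℕ)))).mul (g t).2
    have h2 := hq2 (q + t) (by omega) (by have := t.2; omega)
    rwa [Nat.add_sub_cancel' h2] at h1
  have hinj : Function.Injective T := by
    rw [← LinearMap.ker_eq_bot, LinearMap.ker_eq_bot']
    intro g hg
    funext t
    have := hc1 g t
    rw [hg, map_zero, Polynomial.coeff_zero] at this
    have h2 := (mul_eq_zero.mp this.symm).resolve_left (pow_ne_zero _ hG0)
    exact Subtype.ext h2
  have hrange : LinearMap.range T = D := by
    apply le_antisymm
    · rintro _ ⟨g, rfl⟩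
      rw [hD]
      refine ⟨?_, ?_, ?_⟩
      · rw [hT]
        refine IsHomogeneous.sum _ _ _ fun t _ => ?_
        have := hΦ3 _ _ (q + (t:ℕ)) (hTh g t)
        rwa [show d - (q + (t:ℕ)) + (q + t) = d by have := t.2; omega] at this
      · intro j
        by_cases hj : ∃ t : Fin (d - m + 1 - q), j = q + t
        · obtain ⟨t, rfl⟩ := hj
          rw [hc1, mem_pow_idealOfVars_iff']
          intro x hx
          apply (hTh g t).coeff_eq_zero
          have := t.2
          omega
        · rw [hc2 g j (by push Not at hj; exact hj)]
          exact zero_mem _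
      · intro j
        by_cases hj : ∃ t : Fin (d - m + 1 - q), j = q + t
        · obtain ⟨t, rfl⟩ := hj
          rw [hc1]
          exact dvd_mul_right _ _
        · rw [hc2 g j (by push Not at hj; exact hj)]
          exact dvd_zero _
    · intro F hF
      rw [hD] at hF
      obtain ⟨hF0, hF1, hF2⟩ := hF
      have hle : ∀ j, (Φ F).coeff j ≠ 0 → j ≤ d := by
        intro j hj
        by_contra h
        exact hj (hΦ2 F d j hF0 (by omega))
      have hle2 : ∀ j, (Φ F).coeff j ≠ 0 → j ≤ d - m := by
        intro j hj
        have h1 := hle j hj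
        have h2 := hΦ1 F d j (d - j) hF0 (by omega)
        obtain ⟨u, hu⟩ := MvPolynomial.ne_zero_iff.mp hj
        have h3 := (mem_pow_idealOfVars_iff _ _).mp (hF1 j) u (by simpa using hu)
        have h4 : u.degree = d - j := by
          by_contra h
          exact hu (h2.coeff_eq_zero h)
        omega
      have hfac : ∀ j, (Φ F).coeff j ≠ 0 → l * (m - j) ≤ d - j ∧
          ∃ h : MvPolynomial (Fin 2) K, h.IsHomogeneous (d - j - l * (m - j)) ∧
            (Φ F).coeff j = G ^ (m - j) * h := by
        intro j hj
        have h1 := hle j hj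
        exact homog_factor (hGh _) (hΦ1 F d j (d - j) hF0 (by omega)) (hF2 j) hj
      have hex : ∀ t : Fin (d - m + 1 - q), ∃ h : W t,
          (Φ F).coeff (q + t) = G ^ (m - (q + (t:ℕ))) * (h : MvPolynomial (Fin 2) K) := by
        intro t
        by_cases hz : (Φ F).coeff (q + t) = 0
        · exact ⟨0, by simp [hz]⟩
        · obtain ⟨-, h, hh, he⟩ := hfac _ hz
          exact ⟨⟨h, hh⟩, he⟩
      choose g hg using hex
      refine ⟨g, ?_⟩
      apply Φ.injective
      ext1 j
      by_cases hj : ∃ t : Fin (d - m + 1 - q), j = q + t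
      · obtain ⟨t, rfl⟩ := hj
        rw [hc1, hg]
      · rw [hc2 g j (by push Not at hj; exact hj)]
        by_contra hne
        have hne' : (Φ F).coeff j ≠ 0 := fun h => hne h.symm
        have h1 := hle2 j hne'
        have h2 := hq1 j (hfac j hne').1
        exact hj ⟨⟨j - q, by omega⟩, by simp; omega⟩
  have hfin : ∀ t, Module.Finite K (W t) := fun t =>
    Module.Finite.iff_fg.mpr (homogeneousSubmodule_fg _ _ _)
  rw [← hrange, LinearMap.finrank_range_of_inj hinj, Module.finrank_pi_fintype]
  exact Finset.sum_congr rfl fun t _ => finrank_homog2 K _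

lemma sum_lin (α β : ℤ) (n : ℕ) :
    2 * ∑ t ∈ Finset.range n, (α + β * (t : ℤ)) = n * (2 * α + β * (n - 1)) := by
  induction n with
  | zero => simp
  | succ n ih => rw [Finset.sum_range_succ, mul_add, ih]; push_cast; ring

lemma arith (l m d q : ℕ) (hqm : q ≤ m) (hmd : 2 * m ≤ d)
    (hq2 : ∀ j, q ≤ j → j ≤ d - m → l * (m - j) ≤ d - j) :
    ((∑ t : Fin (d - m + 1 - q), (d - (q + (t:ℕ)) - l * (m - (q + t)) + 1) : ℕ) : ℤ) =
        (((d : ℤ) - q) ^ 2 + 3 * ((d : ℤ) - q)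
          - l * (((m : ℤ) - q) ^ 2 + ((m : ℤ) - q)) - ((m : ℤ) ^ 2 + m)) / 2 + 1 := by
  obtain ⟨a, rfl⟩ := Nat.exists_eq_add_of_le hqm
  obtain ⟨b, rfl⟩ := Nat.exists_eq_add_of_le hmd
  rw [Fin.sum_univ_eq_sum_range
    (fun t => (2 * (q + a) + b) - (q + t) - l * ((q + a) - (q + t)) + 1)]
  rw [show 2 * (q + a) + b - (q + a) + 1 - q = a + (b + 1) by omega, Finset.sum_range_add]
  push_cast
  have h1 : ∑ t ∈ Finset.range a,
      ((2 * (q + a) + b - (q + t) - l * (q + a - (q + t)) : ℕ) + 1 : ℤ) =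
      ∑ t ∈ Finset.range a, ((q + 2 * a + b - l * a + 1 : ℤ) + (l - 1) * (t : ℤ)) := by
    refine Finset.sum_congr rfl fun t ht => ?_
    rw [Finset.mem_range] at ht
    have := hq2 (q + t) (by omega) (by omega)
    rw [Nat.cast_sub this, Nat.cast_mul, Nat.cast_sub (by omega), Nat.cast_sub (by omega)]
    push_cast
    ring
  have h2 : ∑ t ∈ Finset.range (b + 1),
      ((2 * (q + a) + b - (q + (a + t)) - l * (q + a - (q + (a + t))) : ℕ) + 1 : ℤ) =
      ∑ t ∈ Finset.range (b + 1), ((q + a + b + 1 : ℤ) + (-1) * (t : ℤ)) := by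
    refine Finset.sum_congr rfl fun t ht => ?_
    rw [Finset.mem_range] at ht
    rw [show q + a - (q + (a + t)) = 0 by omega, mul_zero, Nat.sub_zero, Nat.cast_sub (by omega)]
    push_cast
    ring
  rw [h1, h2]
  have e1 := sum_lin (q + 2 * a + b - l * a + 1 : ℤ) (l - 1) a
  have e2 := sum_lin (q + a + b + 1 : ℤ) (-1) (b + 1)
  set s1 := ∑ t ∈ Finset.range a, ((q + 2 * a + b - l * a + 1 : ℤ) + (l - 1) * (t : ℤ))
  set s2 := ∑ t ∈ Finset.range (b + 1), ((q + a + b + 1 : ℤ) + (-1) * (t : ℤ))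
  push_cast at e1 e2
  rw [show s1 + s2 = (s1 + s2 - 1) + 1 by ring]
  congr 1
  symm
  apply Int.ediv_eq_of_eq_mul_right (by norm_num)
  linear_combination -e1 - e2

theorem stmt_2
    (K : Type*) [Field K] [CharZero K]
    -- `l > 2` points on a line plus one point off the line
    (l : ℕ) (hl : 2 < l)
    (p : Fin (l + 1) → Fin 3 → K) (hp0 : ∀ i, p i ≠ 0)
    (hdist : ∀ i j, i ≠ j → ∀ c : K, c • p i ≠ p j)
    (L : Fin 3 → K) (hL : L ≠ 0)
    (hon : ∀ i : Fin (l + 1), (i : ℕ) < l → ∑ j, L j * p i j = 0)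
    (hoff : ∑ j, L j * p (Fin.last l) j ≠ 0)
    -- `P i` is the homogeneous prime ideal of all forms vanishing at `p i`
    (P : Fin (l + 1) → Ideal (MvPolynomial (Fin 3) K))
    (hP : ∀ i F, F ∈ P i ↔ ∀ n, eval (p i) (homogeneousComponent n F) = 0)
    -- the uniform fat point ideal `I^{(m)} = P_1^m ∩ ⋯ ∩ P_{l+1}^m`
    (m : ℕ) (hm : 1 ≤ m)
    (Im : Ideal (MvPolynomial (Fin 3) K)) (hIm : Im = ⨅ i, P i ^ m) :
    ∀ d : ℕ, 2 * m ≤ d → d < l * m →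
      -- `q = ⌈(lm − d)/(l − 1)⌉`
      ∀ q : ℕ, q = (l * m - d) ⌈/⌉ (l - 1) →
      (hdim Im d : ℤ) =
        (((d : ℤ) - q) ^ 2 + 3 * ((d : ℤ) - q)
          - l * (((m : ℤ) - q) ^ 2 + ((m : ℤ) - q)) - ((m : ℤ) ^ 2 + m)) / 2 + 1 := by
  intro d hd1 hd2 q hq
  -- numerics
  have hl1 : 0 < l - 1 := by omega
  have hqle : ∀ j, q ≤ j ↔ l * m - d ≤ (l - 1) * j := by
    intro j
    rw [hq, ceilDiv_le_iff_le_mul hl1]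
  have hqm : q ≤ m := by
    rw [hqle, Nat.sub_mul, one_mul]
    omega
  have key : ∀ j, j ≤ m → (l * (m - j) ≤ d - j ↔ q ≤ j) := by
    intro j hj
    rw [hqle]
    have h3 : l * m = l * (m - j) + (l - 1) * j + j := by
      obtain ⟨a, ha⟩ := Nat.exists_eq_add_of_le hj
      obtain ⟨k, hk⟩ : ∃ k, l = k + 1 := ⟨l - 1, by omega⟩
      rw [ha, hk, Nat.add_sub_cancel_left, Nat.add_sub_cancel]
      ring
    omega
  have hq1 : ∀ j, l * (m - j) ≤ d - j → q ≤ j := by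
    intro j hj
    by_cases h : j ≤ m
    · exact (key j h).mp hj
    · omega
  have hq2 : ∀ j, q ≤ j → j ≤ d - m → l * (m - j) ≤ d - j := by
    intro j hj hj'
    by_cases h : j ≤ m
    · exact (key j h).mpr hj
    · rw [show m - j = 0 by omega]; omega
  -- coordinates
  obtain ⟨M, N, hMN, hNM, hM0, hM1⟩ := exists_coord L (p (Fin.last l)) hoff
  obtain ⟨Φ, hΦ0, hΦ1, hΦ2, hΦ3⟩ := exists_Phi M N hMN hNM
  have hPmap : ∀ i f, f ∈ (P i).map Φ ↔ chi (M.mulVec (p i)) f = 0 := by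
    intro i f
    rw [← hΦ0, th_eq_zero_iff, ← hP]
    constructor
    · intro h
      obtain ⟨x, hx, rfl⟩ := (Ideal.mem_map_of_equiv Φ f).mp h
      simpa using hx
    · intro h
      exact (Ideal.mem_map_of_equiv Φ f).mpr ⟨_, h, by simp⟩
  have hpow : ∀ i F, F ∈ P i ^ m ↔ Φ F ∈ (P i).map Φ ^ m := by
    intro i F
    rw [← Ideal.map_pow]
    constructor
    · exact fun h => Ideal.mem_map_of_mem _ h
    · intro h
      obtain ⟨x, hx, he⟩ := (Ideal.mem_map_of_equiv Φ _).mp h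
      rwa [← Φ.injective he]
  let w : Fin l → Fin 3 → K := fun i => M.mulVec (p i.castSucc)
  have hw0 : ∀ i, w i 0 = 0 := fun i => hM1 _ (hon i.castSucc i.2)
  have hNw : ∀ i, N.mulVec (w i) = p i.castSucc := by
    intro i
    simp [w, Matrix.mulVec_mulVec, hNM]
  have hwne : ∀ i, w i ≠ 0 := by
    intro i h
    apply hp0 i.castSucc
    rw [← hNw, h, Matrix.mulVec_zero]
  have hprop : ∀ i k, i ≠ k → ∀ c : K, c • w i ≠ w k := by
    intro i k hik c h
    apply hdist i.castSucc k.castSucc (by simpa using hik) c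
    rw [← hNw, ← hNw, ← h, Matrix.mulVec_smul]
  let ℓ : Fin l → MvPolynomial (Fin 2) K := fun i => lf (w i 1) (w i 2)
  have hrel : ∀ i k, i ≠ k → IsRelPrime (ℓ i) (ℓ k) := by
    intro i k hik
    apply lf_relPrime
    intro hdet
    by_cases h1 : w i 1 = 0
    · have h2 : w i 2 ≠ 0 := by
        intro h2
        apply hwne i
        ext s
        fin_cases s
        · exact hw0 i
        · exact h1
        · exact h2
      apply hprop i k hik (w k 2 / w i 2)
      ext s
      fin_cases s
      · simp [hw0]
      · rw [h1] at hdet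
        simp [h2] at hdet
        simp [h1, hdet]
      · simp [h2]
    · apply hprop i k hik (w k 1 / w i 1)
      ext s
      fin_cases s
      · simp [hw0]
      · simp [h1]
      · simp
        field_simp
        linear_combination -hdet
  let G := ∏ i, ℓ i
  have hG : G.IsHomogeneous l := by
    have := IsHomogeneous.prod Finset.univ ℓ (fun _ => 1) (fun i _ => lf_homog _ _)
    simpa using this
  have hℓ0 : ∀ i, ℓ i ≠ 0 := by
    intro i h
    apply hwne i
    have h1 : (ℓ i).eval ![1, 0] = 0 := by rw [h, map_zero]
    have h2 : (ℓ i).eval ![0, 1] = 0 := by rw [h, map_zero]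
    simp [ℓ, lf] at h1 h2
    ext s
    fin_cases s
    · exact hw0 i
    · exact h2
    · exact h1
  have hG0 : G ≠ 0 := Finset.prod_ne_zero_iff.mpr fun i _ => hℓ0 i
  have hon' : ∀ (i : Fin l), (P i.castSucc).map Φ = Ideal.span {Polynomial.C (ℓ i), Polynomial.X} := by
    intro i
    ext f
    rw [hPmap]
    exact chi_on (w i) (hw0 i) (hwne i) f
  have hoff' : (P (Fin.last l)).map Φ = (idealOfVars (Fin 2) K).map Polynomial.C := by
    ext f
    rw [hPmap, hM0, chi_off]
  have hD : ∀ F, F ∈ degComp Im d ↔ F.IsHomogeneous d ∧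
      (∀ j, (Φ F).coeff j ∈ idealOfVars (Fin 2) K ^ m) ∧ ∀ j, G ^ (m - j) ∣ (Φ F).coeff j := by
    intro F
    have h1 : F ∈ Im ↔ (∀ j, (Φ F).coeff j ∈ idealOfVars (Fin 2) K ^ m) ∧
        ∀ j, G ^ (m - j) ∣ (Φ F).coeff j := by
      rw [hIm, Ideal.mem_iInf, Fin.forall_fin_succ', and_comm]
      refine and_congr ?_ ?_
      · rw [hpow, hoff', ← Ideal.map_pow, Ideal.mem_map_C_iff]
      · simp only [hpow, hon', mem_span_pair_pow]
        rw [forall_comm]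
        refine forall_congr' fun j => ?_
        constructor
        · intro h
          rw [← Finset.prod_pow]
          exact Fintype.prod_dvd_of_isRelPrime (fun i k hik => (hrel i k hik).pow) h
        · intro h i
          exact (pow_dvd_pow_of_dvd (Finset.dvd_prod_of_mem ℓ (Finset.mem_univ i)) _).trans h
    rw [← h1, and_comm]
    simp [degComp]
  rw [hdim, dim_core Φ hΦ1 hΦ2 hΦ3 l m d q G hG hG0 _ hD (by omega) hq1 hq2]
  exact arith l m d q hqm hd1 hq2
end

section
/- Suppose m ≥ 1 is an integer divisible by l(l−1). For every degree d with 2m − m/l ≤ d < 2m, setting γ = 2m − d, q = ⌈(lm − d)/(l − 1)⌉, a = d − q − γl, b = m − q − γ, and c = m − γl, one has dim_K (I^{(m)})_d = [ a² + 3a − l·(b² + b) − (c² + c) ] / 2 + 1. -/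
open MvPolynomial Filter

section helpers
variable {K : Type*} [Field K]

/-- Dehomogenization with respect to the second variable. -/
noncomputable def dehom : MvPolynomial (Fin 3) K →ₐ[K] Polynomial (Polynomial K) :=
  aeval ![Polynomial.C Polynomial.X, 1, Polynomial.X]

/-- Homogenization of a univariate polynomial, as a ternary form in the first two variables. -/
noncomputable def homog (n : ℕ) : Polynomial K →ₗ[K] MvPolynomial (Fin 3) K :=
  (rename (Fin.castSucc : Fin 2 → Fin 3)).toLinearMap ∘ₗ Polynomial.homogenizeLM n

lemma homog_apply (n : ℕ) (g : Polynomial K) :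
    homog n g = rename (Fin.castSucc : Fin 2 → Fin 3) (g.homogenize n) := rfl

lemma homog_isHomogeneous (n : ℕ) (g : Polynomial K) : (homog n g).IsHomogeneous n :=
  (Polynomial.isHomogeneous_homogenize g).rename_isHomogeneous

lemma homog_mul {n k : ℕ} (g h : Polynomial K) (hg : g.natDegree ≤ n) (hh : h.natDegree ≤ k) :
    homog (n + k) (g * h) = homog n g * homog k h := by
  simp [homog_apply, Polynomial.homogenize_mul g h hg hh]

lemma dehom_homog (n : ℕ) (g : Polynomial K) (hg : g.natDegree ≤ n) :
    dehom (homog n g) = Polynomial.C g := by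
  rw [homog_apply, dehom, aeval_rename, Polynomial.aeval_homogenize_of_eq_one hg]
  · simp only [Function.comp]
    have : (![Polynomial.C Polynomial.X, 1, Polynomial.X] : Fin 3 → Polynomial (Polynomial K))
      (Fin.castSucc 0) = Polynomial.C Polynomial.X := rfl
    rw [this]
    have h2 := Polynomial.aeval_algHom_apply (Polynomial.CAlgHom (R := K) (A := Polynomial K))
      Polynomial.X g
    simpa using h2
  · rfl

lemma deg3 {d : ℕ} {F : MvPolynomial (Fin 3) K} (hF : F.IsHomogeneous d) {e : Fin 3 →₀ ℕ}
    (he : e ∈ F.support) : e 0 + e 1 + e 2 = d := by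
  rw [hF.degree_eq_sum_deg_support he, ← Fin.sum_univ_three (fun i => e i)]
  symm
  exact Finset.sum_subset (Finset.subset_univ _) (by simp)

lemma rename_term (a b : ℕ) (c : K) : rename (Fin.castSucc : Fin 2 → Fin 3)
      (monomial (Finsupp.update (Finsupp.single 0 a) 1 b) c) =
      C c * (X 0 ^ a * X 1 ^ b) := by
  rw [monomial_eq, Finsupp.prod_fintype _ _ (by simp), Fin.prod_univ_two]
  simp

lemma homog_ext {V : Type*} [AddCommGroup V] [Module K V]
    (S T : MvPolynomial (Fin 3) K →ₗ[K] V) (d : ℕ)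
    (h : ∀ (e : Fin 3 →₀ ℕ) (c : K), e 0 + e 1 + e 2 = d → S (monomial e c) = T (monomial e c))
    (F : MvPolynomial (Fin 3) K) (hF : F.IsHomogeneous d) : S F = T F := by
  rw [F.as_sum, map_sum, map_sum]
  refine Finset.sum_congr rfl fun e he => h e _ (deg3 hF he)

lemma dehom_monomial (e : Fin 3 →₀ ℕ) (c : K) : dehom (monomial e c) =
    Polynomial.monomial (e 2) (Polynomial.monomial (e 0) c) := by
  rw [dehom, aeval_monomial, Finsupp.prod_fintype _ _ (by simp), Fin.prod_univ_three]
  simp [← Polynomial.C_mul_X_pow_eq_monomial, mul_assoc]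

/-- The `k`-th slice of a ternary polynomial. -/
noncomputable def slice (k : ℕ) : MvPolynomial (Fin 3) K →ₗ[K] Polynomial K where
  toFun F := (dehom F).coeff k
  map_add' := by simp
  map_smul' := by simp

lemma slice_apply (k : ℕ) (F : MvPolynomial (Fin 3) K) : slice k F = (dehom F).coeff k := rfl

lemma slice_monomial (k : ℕ) (e : Fin 3 →₀ ℕ) (c : K) : slice k (monomial e c) =
    if e 2 = k then Polynomial.monomial (e 0) c else 0 := by
  rw [slice_apply, dehom_monomial, Polynomial.coeff_monomial]

lemma eq_sum_slice {d : ℕ} (F : MvPolynomial (Fin 3) K) (hF : F.IsHomogeneous d) :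
    F = ∑ k ∈ Finset.range (d + 1), X 2 ^ k * homog (d - k) (slice k F) := by
  have := homog_ext LinearMap.id (∑ k ∈ Finset.range (d + 1),
    (LinearMap.mulLeft K (X 2 ^ k)) ∘ₗ homog (d - k) ∘ₗ slice k) d ?_ F hF
  · simpa using this
  · intro e c he
    simp only [LinearMap.id_apply, LinearMap.sum_apply, LinearMap.comp_apply,
      LinearMap.mulLeft_apply, slice_monomial]
    rw [Finset.sum_eq_single (e 2)]
    · rw [if_pos rfl, homog_apply, Polynomial.homogenize_monomial (by omega), rename_term,
        monomial_eq, Finsupp.prod_fintype _ _ (by simp), Fin.prod_univ_three]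
      have : d - e 2 - e 0 = e 1 := by omega
      rw [this]
      ring
    · intro k _ hk
      rw [if_neg (Ne.symm hk)]; simp
    · intro h; simp at h; omega

lemma slice_natDegree_le {d : ℕ} (F : MvPolynomial (Fin 3) K) (hF : F.IsHomogeneous d) (k : ℕ) :
    (slice k F).natDegree ≤ d - k := by
  have : slice k F ∈ Polynomial.degreeLE K ((d - k : ℕ) : WithBot ℕ) := by
    rw [F.as_sum, map_sum]
    refine Submodule.sum_mem _ fun e he => ?_
    have := deg3 hF he
    rw [slice_monomial]
    split_ifs with h
    · rw [Polynomial.mem_degreeLE]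
      refine (Polynomial.degree_monomial_le _ _).trans ?_
      exact_mod_cast (by omega)
    · exact zero_mem _
  rw [Polynomial.mem_degreeLE] at this
  rwa [Polynomial.natDegree_le_iff_degree_le]

/-- ideal of the point `(t : 1 : 0)`. -/
noncomputable def ptA (t : K) : Ideal (MvPolynomial (Fin 3) K) :=
  Ideal.span {X 0 - C t * X 1, X 2}

/-- ideal of the point `(0 : 0 : 1)`. -/
noncomputable def ptB (K : Type*) [Field K] : Ideal (MvPolynomial (Fin 3) K) :=
  Ideal.span {X 0, X 1}

lemma pow_dvd_of_mem {A B : Type*} [CommRing A] [CommRing B] (f : A →+* B) (J : Ideal A) (b : B)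
    (h : ∀ x ∈ J, b ∣ f x) (m : ℕ) {x : A} (hx : x ∈ J ^ m) : b ^ m ∣ f x := by
  have h1 : J.map f ≤ Ideal.span {b} := by
    rw [Ideal.map_le_iff_le_comap]
    intro y hy
    rw [Ideal.mem_comap, Ideal.mem_span_singleton]
    exact h y hy
  have h2 := Ideal.mem_map_of_mem f hx
  rw [Ideal.map_pow] at h2
  have h3 := Ideal.pow_right_mono h1 m h2
  rwa [Ideal.span_singleton_pow, Ideal.mem_span_singleton] at h3

lemma dvd_of_mem_span {A B : Type*} [CommRing A] [CommRing B] (f : A →+* B) (u v : A) (b : B)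
    (hu : b ∣ f u) (hv : b ∣ f v) : ∀ x ∈ Ideal.span {u, v}, b ∣ f x := by
  intro x hx
  obtain ⟨r, s, rfl⟩ := Ideal.mem_span_pair.1 hx
  simp only [map_add, map_mul]
  exact dvd_add (hu.mul_left _) (hv.mul_left _)

lemma slice_dvd_of_mem_ptA (t : K) (m : ℕ) (F : MvPolynomial (Fin 3) K) (hF : F ∈ ptA t ^ m)
    (k : ℕ) : (Polynomial.X - Polynomial.C t) ^ (m - k) ∣ slice k F := by
  rcases le_total m k with hk | hk
  · simp [Nat.sub_eq_zero_of_le hk]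
  set a : Polynomial K := Polynomial.X - Polynomial.C t with ha
  let f : MvPolynomial (Fin 3) K →+* Polynomial (Polynomial K) :=
    (Polynomial.compRingHom (Polynomial.C a * Polynomial.X)).comp (dehom (K := K)).toRingHom
  have h := pow_dvd_of_mem f (ptA t) (Polynomial.C a) (by
    apply dvd_of_mem_span
    · simp [f, dehom, ha]
    · simp [f, dehom]) m hF
  obtain ⟨g, hg⟩ := h
  have h2 := congrArg (fun p => Polynomial.coeff p k) hg
  simp only [f, RingHom.comp_apply, Polynomial.coe_compRingHom_apply,
    Polynomial.comp_C_mul_X_coeff, ← Polynomial.C_pow, Polynomial.coeff_C_mul] at h2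
  refine ⟨g.coeff k, ?_⟩
  have ha0 : a ^ k ≠ 0 := pow_ne_zero _ (Polynomial.X_sub_C_ne_zero t)
  apply mul_right_cancel₀ ha0
  have h3 : a ^ m = a ^ (m - k) * a ^ k := by rw [← pow_add]; congr 1; omega
  rw [h3] at h2
  change slice k F * a ^ k = _ at h2
  rw [h2]; ring

lemma slice_eq_zero_of_mem_ptB (m d : ℕ) (F : MvPolynomial (Fin 3) K) (hF : F ∈ ptB K ^ m)
    (hd : F.IsHomogeneous d) (k : ℕ) (hk : d < m + k) : slice k F = 0 := by
  by_cases hkd : d < k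
  · have := homog_ext (slice k) 0 d (by
      intro e c he
      rw [slice_monomial, if_neg (by omega)]; rfl) F hd
    simpa using this
  let f : MvPolynomial (Fin 3) K →ₐ[K] Polynomial (Polynomial K) :=
    aeval ![Polynomial.C Polynomial.X * Polynomial.X, Polynomial.X, 1]
  have h := pow_dvd_of_mem f.toRingHom (ptB K) Polynomial.X (by
    apply dvd_of_mem_span
    · simp [f]
    · simp [f]) m hF
  let T : MvPolynomial (Fin 3) K →ₗ[K] Polynomial K :=
    { toFun := fun F => (f F).coeff (d - k)
      map_add' := by simp
      map_smul' := by simp }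
  have h2 := homog_ext (slice k) T d (by
    intro e c he
    rw [slice_monomial]
    simp only [T, f, LinearMap.coe_mk, AddHom.coe_mk]
    rw [aeval_monomial, Finsupp.prod_fintype _ _ (by simp), Fin.prod_univ_three]
    have h3 : (algebraMap K (Polynomial (Polynomial K))) c *
        ((Polynomial.C Polynomial.X * Polynomial.X) ^ e 0 * Polynomial.X ^ e 1 * 1 ^ e 2) =
        Polynomial.monomial (e 0 + e 1) (Polynomial.monomial (e 0) c) := by
      simp only [← Polynomial.C_mul_X_pow_eq_monomial, map_mul, map_pow]
      have : (algebraMap K (Polynomial (Polynomial K))) c = Polynomial.C (Polynomial.C c) := rfl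
      rw [this]
      ring
    have h4 := congrArg (fun p => Polynomial.coeff p (d - k)) h3
    refine Eq.trans ?_ h4.symm
    rw [Polynomial.coeff_monomial]
    have : e 0 + e 1 = d - k ↔ e 2 = k := by omega
    simp [this]) F hd
  rw [h2]
  exact Polynomial.X_pow_dvd_iff.1 h _ (by omega)

lemma homog_mem_ptB (n m : ℕ) (g : Polynomial K) (h : m ≤ n) : homog n g ∈ ptB K ^ m := by
  rw [homog_apply, Polynomial.homogenize, map_sum]
  refine Submodule.sum_mem _ fun ij hij => ?_
  rw [Finset.HasAntidiagonal.mem_antidiagonal] at hij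
  apply Ideal.pow_le_pow_right h
  rw [rename_term, ← hij, pow_add]
  apply Ideal.mul_mem_left
  apply Ideal.mul_mem_mul <;> apply Ideal.pow_mem_pow <;> apply Ideal.subset_span <;> simp

lemma homog_mem_ptA (t : K) (n r : ℕ) (g : Polynomial K) (hg : g.natDegree ≤ n)
    (hdvd : (Polynomial.X - Polynomial.C t) ^ r ∣ g) : homog n g ∈ ptA t ^ r := by
  by_cases h0 : g = 0
  · simp [h0]
  obtain ⟨h, rfl⟩ := hdvd
  have hh : h ≠ 0 := right_ne_zero_of_mul h0
  have hdeg : ((Polynomial.X - Polynomial.C t) ^ r * h).natDegree = r + h.natDegree := by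
    rw [Polynomial.natDegree_mul (left_ne_zero_of_mul h0) hh]; simp
  rw [hdeg] at hg
  have key : ∀ r, homog r ((Polynomial.X - Polynomial.C t) ^ r) = (X 0 - C t * X 1) ^ r := by
    intro r
    induction r with
    | zero => simp [homog_apply]
    | succ r ih =>
      rw [pow_succ, homog_mul _ _ (by simp) (by simp), ih, pow_succ]
      congr 1
      simp [homog_apply]
  have hn : n = r + (n - r) := by omega
  rw [hn, homog_mul _ _ (by simp) (by omega), key]
  apply Ideal.mul_mem_right
  apply Ideal.pow_mem_pow
  apply Ideal.subset_span; simp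

lemma dvd_pi {l : ℕ} (t : Fin l → K) (i : Fin l) (r : ℕ) (g : Polynomial K) :
    (Polynomial.X - Polynomial.C (t i)) ^ r ∣
      g * (∏ j, (Polynomial.X - Polynomial.C (t j))) ^ r :=
  (pow_dvd_pow_of_dvd (Finset.dvd_prod_of_mem _ (Finset.mem_univ i)) r).mul_left _

lemma natDegree_pi {l : ℕ} (t : Fin l → K) (r : ℕ) :
    ((∏ j, (Polynomial.X - Polynomial.C (t j))) ^ r).natDegree = l * r := by
  rw [Polynomial.natDegree_pow, Polynomial.natDegree_prod _ _ (fun i _ => Polynomial.X_sub_C_ne_zero _)]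
  simp [mul_comm]

lemma pi_ne_zero {l : ℕ} (t : Fin l → K) (r : ℕ) :
    ((∏ j, (Polynomial.X - Polynomial.C (t j))) ^ r) ≠ 0 :=
  pow_ne_zero _ (Finset.prod_ne_zero_iff.2 fun _ _ => Polynomial.X_sub_C_ne_zero _)

/-- The parametrization of the degree `d` part by tuples of univariate polynomials. -/
noncomputable def param {l : ℕ} (t : Fin l → K) (m d : ℕ) :
    ((k : Fin (d - m + 1)) → Polynomial.degreeLT K (d + 1 - k - l * (m - k))) →ₗ[K]
      MvPolynomial (Fin 3) K :=
  ∑ k : Fin (d - m + 1), (LinearMap.mulLeft K (X 2 ^ (k : ℕ))) ∘ₗ homog (d - k) ∘ₗ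
    (LinearMap.mulRight K ((∏ j, (Polynomial.X - Polynomial.C (t j))) ^ (m - (k : ℕ)))) ∘ₗ
    (Polynomial.degreeLT K (d + 1 - k - l * (m - k))).subtype ∘ₗ LinearMap.proj k

lemma param_apply {l : ℕ} (t : Fin l → K) (m d : ℕ)
    (g : (k : Fin (d - m + 1)) → Polynomial.degreeLT K (d + 1 - k - l * (m - k))) :
    param t m d g = ∑ k : Fin (d - m + 1), X 2 ^ (k : ℕ) *
      homog (d - k) ((g k : Polynomial K) *
        (∏ j, (Polynomial.X - Polynomial.C (t j))) ^ (m - (k : ℕ))) := by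
  simp [param]

lemma term_natDegree_le {l : ℕ} (t : Fin l → K) (m d k : ℕ)
    (g : Polynomial K) (hg : g ∈ Polynomial.degreeLT K (d + 1 - k - l * (m - k))) :
    (g * (∏ j, (Polynomial.X - Polynomial.C (t j))) ^ (m - k)).natDegree ≤ d - k := by
  by_cases h : g = 0
  · simp [h]
  rw [Polynomial.mem_degreeLT, ← Polynomial.natDegree_lt_iff_degree_lt h] at hg
  rw [Polynomial.natDegree_mul h (pi_ne_zero t _), natDegree_pi]
  omega

lemma param_injective {l : ℕ} (t : Fin l → K) (m d : ℕ) :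
    Function.Injective (param t m d) := by
  rw [injective_iff_map_eq_zero]
  intro g hg
  ext1 k
  have h := congrArg (slice (k : ℕ)) hg
  rw [param_apply, map_sum, map_zero, Finset.sum_eq_single k] at h
  · rw [slice_apply, map_mul, dehom_homog _ _ (term_natDegree_le t m d k _ (g k).2)] at h
    have h2 : dehom (X 2 ^ (k : ℕ) : MvPolynomial (Fin 3) K) = Polynomial.X ^ (k : ℕ) := by
      simp [dehom]
    rw [h2, Polynomial.coeff_X_pow_mul', if_pos le_rfl] at h
    simp only [Nat.sub_self, Polynomial.coeff_C_zero] at h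
    rcases mul_eq_zero.1 h with h | h
    · exact Subtype.ext h
    · exact absurd h (pi_ne_zero t _)
  · intro j _ hj
    rw [slice_apply, map_mul, dehom_homog _ _ (term_natDegree_le t m d j _ (g j).2)]
    have h2 : dehom (X 2 ^ (j : ℕ) : MvPolynomial (Fin 3) K) = Polynomial.X ^ (j : ℕ) := by
      simp [dehom]
    rw [h2, mul_comm, Polynomial.coeff_C_mul, Polynomial.coeff_X_pow, if_neg, mul_zero]
    intro h; exact hj (Fin.ext h.symm)
  · simp

lemma param_range {l : ℕ} (t : Fin l → K) (ht : Function.Injective t) (m d : ℕ) (hmd : m ≤ d)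
    (hd : d < 2 * m) :
    LinearMap.range (param t m d) = degComp ((⨅ i, ptA (t i) ^ m) ⊓ ptB K ^ m) d := by
  apply le_antisymm
  · rintro _ ⟨g, rfl⟩
    rw [param_apply]
    refine Submodule.sum_mem _ fun k _ => ?_
    have hk : (k : ℕ) ≤ d - m := by omega
    refine ⟨⟨?_, ?_⟩, ?_⟩
    · simp only [SetLike.mem_coe]
      rw [Ideal.mem_iInf]
      intro i
      have : m = k + (m - k) := by omega
      nth_rw 1 [this]
      rw [pow_add]
      apply Ideal.mul_mem_mul
      · apply Ideal.pow_mem_pow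
        apply Ideal.subset_span; simp
      · exact homog_mem_ptA _ _ _ _ (term_natDegree_le t m d k _ (g k).2) (dvd_pi t i _ _)
    · apply Ideal.mul_mem_left
      exact homog_mem_ptB _ _ _ (by omega)
    · have := (isHomogeneous_X_pow (R := K) (2 : Fin 3) (k : ℕ)).mul (homog_isHomogeneous (d - k)
        ((g k : Polynomial K) * (∏ j, (Polynomial.X - Polynomial.C (t j))) ^ (m - (k : ℕ))))
      rw [show (k : ℕ) + (d - k) = d by omega] at this
      exact this
  · rintro F ⟨⟨hA, hB⟩, hF⟩
    simp only [SetLike.mem_coe] at hA hB hF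
    rw [Ideal.mem_iInf] at hA
    rw [mem_homogeneousSubmodule] at hF
    have hdiv : ∀ k, (∏ j, (Polynomial.X - Polynomial.C (t j))) ^ (m - k) ∣ slice k F := by
      intro k
      rw [← Finset.prod_pow]
      apply Fintype.prod_dvd_of_coprime
      · intro i j hij
        exact (Polynomial.pairwise_coprime_X_sub_C ht hij).pow
      · intro i
        exact slice_dvd_of_mem_ptA _ _ _ (hA i) k
    choose g hg using hdiv
    have hgm : ∀ k : Fin (d - m + 1),
        g k ∈ Polynomial.degreeLT K (d + 1 - k - l * (m - k)) := by
      intro k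
      by_cases h0 : g k = 0
      · rw [h0]; exact zero_mem _
      have h1 := slice_natDegree_le F hF k
      rw [hg, Polynomial.natDegree_mul (pi_ne_zero t _) h0, natDegree_pi] at h1
      rw [Polynomial.mem_degreeLT, ← Polynomial.natDegree_lt_iff_degree_lt h0]
      omega
    refine ⟨fun k => ⟨g k, hgm k⟩, ?_⟩
    rw [param_apply]
    conv_rhs => rw [eq_sum_slice F hF]
    rw [← Finset.sum_subset (s₁ := Finset.range (d - m + 1))]
    · rw [Finset.sum_range]
      refine Finset.sum_congr rfl fun k _ => ?_
      rw [hg k, mul_comm (g k)]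
    · intro k hk
      simp only [Finset.mem_range] at hk ⊢; omega
    · intro k _ hk
      simp only [Finset.mem_range] at hk
      rw [slice_eq_zero_of_mem_ptB m d F hB hF k (by omega)]
      simp

lemma core {l : ℕ} (t : Fin l → K) (ht : Function.Injective t) (m d : ℕ) (hmd : m ≤ d)
    (hd : d < 2 * m) :
    hdim ((⨅ i, ptA (t i) ^ m) ⊓ ptB K ^ m) d =
      ∑ k ∈ Finset.range (d - m + 1), (d + 1 - k - l * (m - k)) := by
  rw [hdim, ← param_range t ht m d hmd hd,
    LinearMap.finrank_range_of_inj (param_injective t m d)]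
  have : ∀ n, Module.Finite K (Polynomial.degreeLT K n) := fun n =>
    Module.Finite.equiv (Polynomial.degreeLTEquiv K n).symm
  rw [Module.finrank_pi_fintype, Finset.sum_range]
  refine Finset.sum_congr rfl fun k _ => ?_
  rw [(Polynomial.degreeLTEquiv K _).finrank_eq, Module.finrank_fin_fun]

lemma mem_of_eval_eq_zero (J : Ideal (MvPolynomial (Fin 3) K)) (w : Fin 3 → K)
    (ℓ : MvPolynomial (Fin 3) K) (hJ : ∀ j, X j - C (w j) * ℓ ∈ J) (n : ℕ)
    (G : MvPolynomial (Fin 3) K) (hG : G.IsHomogeneous n) (h : eval w G = 0) : G ∈ J := by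
  rw [← Ideal.Quotient.eq_zero_iff_mem]
  let S : MvPolynomial (Fin 3) K →ₗ[K] (MvPolynomial (Fin 3) K ⧸ J) :=
    (Ideal.Quotient.mkₐ K J).toLinearMap
  let T : MvPolynomial (Fin 3) K →ₗ[K] (MvPolynomial (Fin 3) K ⧸ J) :=
    S ∘ₗ LinearMap.mulRight K (ℓ ^ n) ∘ₗ Algebra.linearMap K (MvPolynomial (Fin 3) K) ∘ₗ
      (aeval w).toLinearMap
  have hX : ∀ j, Ideal.Quotient.mk J (X j) = Ideal.Quotient.mk J (C (w j)) *
      Ideal.Quotient.mk J ℓ := by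
    intro j
    rw [← map_mul, Ideal.Quotient.eq]
    exact hJ j
  have := homog_ext S T n (by
    intro e c he
    have h1 : S (monomial e c) = Ideal.Quotient.mk J (monomial e c) := rfl
    have h2 : T (monomial e c) = Ideal.Quotient.mk J (C (eval w (monomial e c)) * ℓ ^ n) := rfl
    rw [h1, h2, ← he, monomial_eq, Finsupp.prod_fintype _ _ (by simp), Fin.prod_univ_three]
    simp only [map_mul, map_pow, hX, eval_C, eval_X]
    ring) G hG
  change S G = 0
  rw [this]
  simp only [T, LinearMap.comp_apply, AlgHom.toLinearMap_apply]
  rw [show (aeval w) G = 0 from h]; simp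

lemma mem_of_components (J : Ideal (MvPolynomial (Fin 3) K)) (w : Fin 3 → K)
    (ℓ : MvPolynomial (Fin 3) K) (hJ : ∀ j, X j - C (w j) * ℓ ∈ J)
    (F : MvPolynomial (Fin 3) K) (h : ∀ n, eval w (homogeneousComponent n F) = 0) : F ∈ J := by
  rw [← sum_homogeneousComponent F]
  exact Submodule.sum_mem _ fun n _ =>
    mem_of_eval_eq_zero J w ℓ hJ n _ (homogeneousComponent_isHomogeneous n F) (h n)

lemma eval_component_eq_zero {w : Fin 3 → K} {G : MvPolynomial (Fin 3) K} {n : ℕ}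
    (hG : G.IsHomogeneous n) (h : eval w G = 0) (k : ℕ) :
    eval w (homogeneousComponent k G) = 0 := by
  rw [homogeneousComponent_of_mem hG]
  split_ifs <;> simp [h]

lemma eq_ptA (J : Ideal (MvPolynomial (Fin 3) K)) (w : Fin 3 → K)
    (hJ : ∀ F, F ∈ J ↔ ∀ n, eval w (homogeneousComponent n F) = 0) (h1 : w 1 ≠ 0) (h2 : w 2 = 0) :
    J = ptA (w 0 / w 1) := by
  apply le_antisymm
  · intro F hF
    refine mem_of_components _ w (C (w 1)⁻¹ * X 1) ?_ F ((hJ F).1 hF)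
    intro j
    fin_cases j
    · apply Ideal.subset_span
      left
      simp [div_eq_mul_inv, mul_assoc]
    · have : (X 1 - C (w 1) * (C (w 1)⁻¹ * X 1) : MvPolynomial (Fin 3) K) = 0 := by
        rw [← mul_assoc, ← C_mul, mul_inv_cancel₀ h1]; simp
      change (X 1 - C (w 1) * (C (w 1)⁻¹ * X 1) : MvPolynomial (Fin 3) K) ∈ _
      rw [this]; exact Ideal.zero_mem _
    · apply Ideal.subset_span
      simp [h2]
  · rw [ptA, Ideal.span_le]
    rintro x (rfl | rfl)
    · refine (hJ _).2 (eval_component_eq_zero (n := 1) ?_ ?_)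
      · exact (isHomogeneous_X _ _).sub (isHomogeneous_C_mul_X _ _)
      · simp [h1]
    · refine (hJ _).2 (eval_component_eq_zero (n := 1) (isHomogeneous_X _ _) ?_)
      simp [h2]

lemma eq_ptB (J : Ideal (MvPolynomial (Fin 3) K)) (w : Fin 3 → K)
    (hJ : ∀ F, F ∈ J ↔ ∀ n, eval w (homogeneousComponent n F) = 0) (h0 : w 0 = 0) (h1 : w 1 = 0)
    (h2 : w 2 ≠ 0) : J = ptB K := by
  apply le_antisymm
  · intro F hF
    refine mem_of_components _ w (C (w 2)⁻¹ * X 2) ?_ F ((hJ F).1 hF)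
    intro j
    fin_cases j
    · apply Ideal.subset_span
      simp [h0]
    · apply Ideal.subset_span
      simp [h1]
    · have : (X 2 - C (w 2) * (C (w 2)⁻¹ * X 2) : MvPolynomial (Fin 3) K) = 0 := by
        rw [← mul_assoc, ← C_mul, mul_inv_cancel₀ h2]; simp
      change (X 2 - C (w 2) * (C (w 2)⁻¹ * X 2) : MvPolynomial (Fin 3) K) ∈ _
      rw [this]; exact Ideal.zero_mem _
  · rw [ptB, Ideal.span_le]
    rintro x (rfl | rfl)
    · refine (hJ _).2 (eval_component_eq_zero (n := 1) (isHomogeneous_X _ _) ?_)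
      simp [h0]
    · refine (hJ _).2 (eval_component_eq_zero (n := 1) (isHomogeneous_X _ _) ?_)
      simp [h1]

/-- Linear substitution. -/
noncomputable def lsub (M : Matrix (Fin 3) (Fin 3) K) :
    MvPolynomial (Fin 3) K →ₐ[K] MvPolynomial (Fin 3) K :=
  aeval (fun i => ∑ j, C (M i j) * X j)

lemma eval_lsub (M : Matrix (Fin 3) (Fin 3) K) (p : Fin 3 → K) (F : MvPolynomial (Fin 3) K) :
    eval p (lsub M F) = eval (M.mulVec p) F := by
  have : (aeval p).comp (lsub M) = (aeval (M.mulVec p) : MvPolynomial (Fin 3) K →ₐ[K] K) := by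
    ext i
    simp [lsub, Matrix.mulVec, dotProduct]
  exact DFunLike.congr_fun this F

lemma lsub_lsub (M N : Matrix (Fin 3) (Fin 3) K) : (lsub M).comp (lsub N) = lsub (N * M) := by
  ext1 i
  simp only [lsub, AlgHom.comp_apply, aeval_X, map_sum, map_mul, algHom_C, Matrix.mul_apply,
    algebraMap_eq, Finset.mul_sum, Finset.sum_mul]
  rw [Finset.sum_comm]
  simp [mul_assoc]

lemma lsub_one : lsub (1 : Matrix (Fin 3) (Fin 3) K) = AlgHom.id K _ := by
  ext1 i
  simp [lsub, Matrix.one_apply]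

lemma lsub_isHomogeneous (M : Matrix (Fin 3) (Fin 3) K) {F : MvPolynomial (Fin 3) K} {n : ℕ}
    (hF : F.IsHomogeneous n) : (lsub M F).IsHomogeneous n := by
  have := hF.aeval (fun i => ∑ j, C (M i j) * X j : Fin 3 → MvPolynomial (Fin 3) K) (n := 1)
    (fun i => IsHomogeneous.sum _ _ _ fun j _ => isHomogeneous_C_mul_X _ _)
  rw [one_mul] at this
  exact this

lemma component_lsub (M : Matrix (Fin 3) (Fin 3) K) (F : MvPolynomial (Fin 3) K) (n : ℕ) :
    homogeneousComponent n (lsub M F) = lsub M (homogeneousComponent n F) := by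
  conv_lhs => rw [← sum_homogeneousComponent F, map_sum, map_sum]
  have : ∀ k, homogeneousComponent n (lsub M (homogeneousComponent k F)) =
      if n = k then lsub M (homogeneousComponent k F) else 0 := by
    intro k
    rw [homogeneousComponent_of_mem (lsub_isHomogeneous M (homogeneousComponent_isHomogeneous k F))]
  simp only [this, Finset.sum_ite_eq]
  split_ifs with h
  · rfl
  · rw [homogeneousComponent_eq_zero n F (by simpa using h), map_zero]

/-- Invertible linear substitution. -/
noncomputable def lequiv (M N : Matrix (Fin 3) (Fin 3) K) (h1 : M * N = 1) (h2 : N * M = 1) :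
    MvPolynomial (Fin 3) K ≃ₐ[K] MvPolynomial (Fin 3) K :=
  AlgEquiv.ofAlgHom (lsub M) (lsub N) (by rw [lsub_lsub, h2, lsub_one])
    (by rw [lsub_lsub, h1, lsub_one])

lemma hdim_comap (e : MvPolynomial (Fin 3) K ≃ₐ[K] MvPolynomial (Fin 3) K)
    (he : ∀ F n, IsHomogeneous F n → IsHomogeneous (e F) n)
    (he' : ∀ F n, IsHomogeneous F n → IsHomogeneous (e.symm F) n)
    (J : Ideal (MvPolynomial (Fin 3) K)) (d : ℕ) :
    hdim (J.comap (e : MvPolynomial (Fin 3) K ≃+* MvPolynomial (Fin 3) K)) d = hdim J d := by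
  have : degComp J d =
      (degComp (J.comap (e : MvPolynomial (Fin 3) K ≃+* MvPolynomial (Fin 3) K)) d).map
      e.toLinearEquiv.toLinearMap := by
    ext F
    constructor
    · rintro ⟨hJ, hF⟩
      refine ⟨e.symm F, ⟨?_, ?_⟩, ?_⟩
      · change e (e.symm F) ∈ J
        rw [AlgEquiv.apply_symm_apply]; exact hJ
      · exact he' _ _ hF
      · exact AlgEquiv.apply_symm_apply _ _
    · rintro ⟨G, ⟨hJ, hG⟩, rfl⟩
      exact ⟨hJ, he _ _ hG⟩
  rw [hdim, hdim, this]
  exact (LinearEquiv.finrank_map_eq e.toLinearEquiv _).symm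

lemma comap_pow_equiv {A B : Type*} [CommRing A] [CommRing B] (e : A ≃+* B) (J : Ideal B) (m : ℕ) :
    (J ^ m).comap e = (J.comap e) ^ m := by
  have h : ∀ J : Ideal B, J.comap e = J.map e.symm := fun J => Ideal.comap_symm e.symm
  rw [h, h, Ideal.map_pow]

lemma exists_coords [CharZero K] (l : ℕ) (hl : 2 < l)
    (p : Fin (l + 1) → Fin 3 → K) (hp0 : ∀ i, p i ≠ 0)
    (L : Fin 3 → K)
    (hon : ∀ i : Fin (l + 1), (i : ℕ) < l → ∑ j, L j * p i j = 0)
    (hoff : ∑ j, L j * p (Fin.last l) j ≠ 0) :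
    ∃ M N : Matrix (Fin 3) (Fin 3) K, M * N = 1 ∧ N * M = 1 ∧
      (∀ i : Fin (l + 1), (i : ℕ) < l → M.mulVec (p i) 1 ≠ 0 ∧ M.mulVec (p i) 2 = 0) ∧
      M.mulVec (p (Fin.last l)) 0 = 0 ∧ M.mulVec (p (Fin.last l)) 1 = 0 ∧
      M.mulVec (p (Fin.last l)) 2 ≠ 0 := by
  set q := p (Fin.last l) with hq
  have hoff' : L ⬝ᵥ q ≠ 0 := hoff
  have hon' : ∀ i : Fin (l + 1), (i : ℕ) < l → L ⬝ᵥ p i = 0 := hon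
  obtain ⟨f, hf⟩ := Module.exists_dual_forall_apply_ne_zero (K := K) p hp0
  obtain ⟨u0, hu0⟩ : ∃ u0 : Fin 3 → K, ∀ x, f x = u0 ⬝ᵥ x := by
    refine ⟨fun j => f (Pi.single j 1), fun x => ?_⟩
    conv_lhs => rw [pi_eq_sum_univ' x]
    simp [dotProduct, mul_comm]
  let u : Fin 3 → K := u0 - ((u0 ⬝ᵥ q) / (L ⬝ᵥ q)) • L
  have huq : u ⬝ᵥ q = 0 := by
    simp only [u, sub_dotProduct, smul_dotProduct, smul_eq_mul]
    field_simp; simp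
  have hup : ∀ i : Fin (l + 1), (i : ℕ) < l → u ⬝ᵥ p i ≠ 0 := by
    intro i hi
    simp only [u, sub_dotProduct, smul_dotProduct, smul_eq_mul, hon' i hi, mul_zero, sub_zero]
    rw [← hu0]; exact hf i
  have h0l : ((0 : Fin (l + 1)) : ℕ) < l := by simp; omega
  obtain ⟨v, hv0, hv⟩ := Matrix.exists_mulVec_eq_zero_iff.2
    (show (Matrix.of ![q, p 0, 0] : Matrix (Fin 3) (Fin 3) K).det = 0 from
      Matrix.det_eq_zero_of_row_eq_zero 2 (by intro j; rfl))
  have hvq : v ⬝ᵥ q = 0 := by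
    rw [dotProduct_comm]; exact congrFun hv 0
  have hvp : v ⬝ᵥ p 0 = 0 := by
    rw [dotProduct_comm]; exact congrFun hv 1
  let M : Matrix (Fin 3) (Fin 3) K := Matrix.of ![v, u, L]
  have hdet : M.det ≠ 0 := by
    intro h
    obtain ⟨w, hw0, hw⟩ := Matrix.exists_vecMul_eq_zero_iff.2 h
    have hw' : w 0 • v + w 1 • u + w 2 • L = 0 := by
      rw [← hw]
      ext j
      simp [Matrix.vecMul, dotProduct, Fin.sum_univ_three, M]
    have e1 := congrArg (fun x => x ⬝ᵥ q) hw'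
    simp only [add_dotProduct, smul_dotProduct, hvq, huq, zero_dotProduct, smul_eq_mul, mul_zero,
      zero_add] at e1
    have w2 : w 2 = 0 := (mul_eq_zero.1 e1).resolve_right hoff'
    have e2 := congrArg (fun x => x ⬝ᵥ p 0) hw'
    simp only [add_dotProduct, smul_dotProduct, hvp, w2, zero_dotProduct, smul_eq_mul, mul_zero,
      zero_add, zero_mul, add_zero] at e2
    have w1 : w 1 = 0 := (mul_eq_zero.1 e2).resolve_right (hup 0 h0l)
    rw [w1, w2] at hw'
    simp only [zero_smul, add_zero] at hw'
    have w0 : w 0 = 0 := (smul_eq_zero.1 hw').resolve_right hv0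
    apply hw0
    ext j
    fin_cases j <;> simp [w0, w1, w2]
  refine ⟨M, M⁻¹, Matrix.mul_nonsing_inv _ (isUnit_iff_ne_zero.2 hdet),
    Matrix.nonsing_inv_mul _ (isUnit_iff_ne_zero.2 hdet), ?_, hvq, huq, hoff'⟩
  intro i hi
  exact ⟨hup i hi, hon' i hi⟩

lemma two_mul_sum_desc (c s : ℤ) (n : ℕ) :
    2 * ∑ j ∈ Finset.range (n + 1), (c + 1 - s * j) = (n + 1) * (2 * c + 2 - s * n) := by
  induction n with
  | zero => simp; ring
  | succ n ih => rw [Finset.sum_range_succ, mul_add, ih]; push_cast; ring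

lemma arith_s3 (l m d γ q : ℕ) (hl : 2 < l) (h1 : 2 * m - m / l ≤ d) (h2 : d < 2 * m)
    (hγ : γ = 2 * m - d) (hq : q = (l * m - d) ⌈/⌉ (l - 1))
    (a b c : ℤ) (ha : a = (d : ℤ) - q - γ * l) (hb : b = (m : ℤ) - q - γ)
    (hc : c = (m : ℤ) - γ * l) :
    ((∑ k ∈ Finset.range (d - m + 1), (d + 1 - k - l * (m - k)) : ℕ) : ℤ) =
      (a ^ 2 + 3 * a - l * (b ^ 2 + b) - (c ^ 2 + c)) / 2 + 1 := by
  have hml : m / l * l ≤ m := Nat.div_mul_le_self m l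
  have hml2 : m / l ≤ m := Nat.div_le_self m l
  have hγl : γ * l ≤ m := le_trans (Nat.mul_le_mul_right l (by omega)) hml
  have hd : d = 2 * m - γ := by omega
  have hγm : γ ≤ m := by omega
  have hlm : d ≤ l * m := by nlinarith
  have hqle : ∀ k : ℕ, q ≤ k ↔ l * m - d ≤ (l - 1) * k := by
    intro k
    rw [hq, ceilDiv_le_iff_le_mul (by omega)]
  obtain ⟨s, rfl⟩ : ∃ s, l = s + 1 := ⟨l - 1, by omega⟩
  simp only [Nat.add_sub_cancel] at hqle
  have hqd : q ≤ d - m := by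
    rw [hqle]
    zify [hlm, show m ≤ d by omega] at *
    have : (d : ℤ) = 2 * m - γ := by omega
    nlinarith
  obtain ⟨n, hn⟩ : ∃ n, d - m = q + n := ⟨d - m - q, by omega⟩
  have hbn : b = n := by omega
  have hterm : ∀ k, k ≤ d - m → q ≤ k →
      ((d + 1 - k - (s + 1) * (m - k) : ℕ) : ℤ) = c + 1 - s * ((d - m - k : ℕ) : ℤ) := by
    intro k hk hqk
    rw [hqle] at hqk
    have hkm : k ≤ m := by omega
    have hkd : k ≤ d + 1 := by omega
    have h3 : (s + 1) * m ≤ d + s * k := by omega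
    have h4 : (s + 1) * (m - k) ≤ d + 1 - k := by
      zify [hkm, hkd] at *
      nlinarith
    have hdz : (d : ℤ) = 2 * m - γ := by omega
    rw [Nat.cast_sub h4, Nat.cast_mul, Nat.cast_sub hkm, Nat.cast_sub hkd, Nat.cast_sub hk,
      Nat.cast_sub (show m ≤ d by omega), hc]
    push_cast
    rw [hdz]
    ring
  have hzero : ∀ k, k < q → d + 1 - k - (s + 1) * (m - k) = 0 := by
    intro k hk
    have hk' : ¬ q ≤ k := by omega
    rw [hqle] at hk'
    have hkm : k ≤ m := by omega
    have hkd : k ≤ d + 1 := by omega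
    have h3 : d + s * k < (s + 1) * m := by omega
    apply Nat.sub_eq_zero_of_le
    zify [hkm, hkd] at *
    nlinarith
  rw [hn, show q + n + 1 = q + (n + 1) by ring, Finset.sum_range_add,
    Finset.sum_eq_zero (fun k hk => hzero k (Finset.mem_range.1 hk)), zero_add,
    ← Finset.sum_range_reflect, Nat.cast_sum]
  have hs : ∑ x ∈ Finset.range (n + 1),
      ((d + 1 - (q + (n + 1 - 1 - x)) - (s + 1) * (m - (q + (n + 1 - 1 - x))) : ℕ) : ℤ) =
      ∑ x ∈ Finset.range (n + 1), (c + 1 - s * x) := by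
    refine Finset.sum_congr rfl fun x hx => ?_
    rw [Finset.mem_range] at hx
    rw [hterm _ (by omega) (by omega)]
    congr 3
    omega
  rw [hs]
  have h5 := two_mul_sum_desc c s n
  have hac : a = b + c := by
    rw [ha, hb, hc]
    have hdz : (d : ℤ) = 2 * m - γ := by omega
    rw [hdz]; ring
  have h6 : a ^ 2 + 3 * a - ((s + 1 : ℕ) : ℤ) * (b ^ 2 + b) - (c ^ 2 + c) =
      2 * (∑ x ∈ Finset.range (n + 1), (c + 1 - s * (x : ℤ)) - 1) := by
    rw [mul_sub, h5, hac, hbn]; push_cast; ring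
  rw [h6]
  omega

end helpers

theorem stmt_3
    (K : Type*) [Field K] [CharZero K]
    -- `l > 2` points on a line plus one point off the line
    (l : ℕ) (hl : 2 < l)
    (p : Fin (l + 1) → Fin 3 → K) (hp0 : ∀ i, p i ≠ 0)
    (hdist : ∀ i j, i ≠ j → ∀ c : K, c • p i ≠ p j)
    (L : Fin 3 → K) (hL : L ≠ 0)
    (hon : ∀ i : Fin (l + 1), (i : ℕ) < l → ∑ j, L j * p i j = 0)
    (hoff : ∑ j, L j * p (Fin.last l) j ≠ 0)
    -- `P i` is the homogeneous prime ideal of all forms vanishing at `p i`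
    (P : Fin (l + 1) → Ideal (MvPolynomial (Fin 3) K))
    (hP : ∀ i F, F ∈ P i ↔ ∀ n, eval (p i) (homogeneousComponent n F) = 0)
    -- the uniform fat point ideal `I^{(m)} = P_1^m ∩ ⋯ ∩ P_{l+1}^m`
    (m : ℕ) (hm : 1 ≤ m) (hdvd : l * (l - 1) ∣ m)
    (Im : Ideal (MvPolynomial (Fin 3) K)) (hIm : Im = ⨅ i, P i ^ m) :
    ∀ d : ℕ, 2 * m - m / l ≤ d → d < 2 * m →
      -- `γ = 2m − d`, `q = ⌈(lm − d)/(l − 1)⌉`, `a = d − q − γl`, `b = m − q − γ`, `c = m − γl`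
      ∀ γ q : ℕ, γ = 2 * m - d → q = (l * m - d) ⌈/⌉ (l - 1) →
      ∀ a b c : ℤ, a = (d : ℤ) - q - γ * l → b = (m : ℤ) - q - γ → c = (m : ℤ) - γ * l →
      (hdim Im d : ℤ) =
        (a ^ 2 + 3 * a - l * (b ^ 2 + b) - (c ^ 2 + c)) / 2 + 1 := by
  intro d h1 h2 γ q hγ hq a b c ha hb hc
  rw [← arith_s3 l m d γ q hl h1 h2 hγ hq a b c ha hb hc]
  congr 1
  have hmd : m ≤ d := by
    have := Nat.div_le_self m l
    omega
  obtain ⟨M, N, hMN, hNM, hMp, hq0, hq1, hq2⟩ := exists_coords l hl p hp0 L hon hoff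
  let t : Fin l → K := fun i =>
    M.mulVec (p i.castSucc) 0 / M.mulVec (p i.castSucc) 1
  have ht : Function.Injective t := by
    intro i j hij
    by_contra hne
    have hi := hMp i.castSucc (by simp)
    have hj := hMp j.castSucc (by simp)
    refine hdist i.castSucc j.castSucc (by simpa using hne)
      (M.mulVec (p j.castSucc) 1 / M.mulVec (p i.castSucc) 1) ?_
    have hinj : Function.Injective M.mulVec := by
      intro x y hxy
      have := congrArg N.mulVec hxy
      simpa [Matrix.mulVec_mulVec, hNM] using this
    apply hinj
    rw [Matrix.mulVec_smul]
    have hij' : M.mulVec (p i.castSucc) 0 / M.mulVec (p i.castSucc) 1 =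
      M.mulVec (p j.castSucc) 0 / M.mulVec (p j.castSucc) 1 := hij
    have hi1 := hi.1
    have hj1 := hj.1
    ext r
    fin_cases r
    · change M.mulVec (p j.castSucc) 1 / M.mulVec (p i.castSucc) 1 * M.mulVec (p i.castSucc) 0 =
        M.mulVec (p j.castSucc) 0
      field_simp at hij' ⊢
      linear_combination hij'
    · change M.mulVec (p j.castSucc) 1 / M.mulVec (p i.castSucc) 1 * M.mulVec (p i.castSucc) 1 =
        M.mulVec (p j.castSucc) 1
      field_simp
    · change M.mulVec (p j.castSucc) 1 / M.mulVec (p i.castSucc) 1 * M.mulVec (p i.castSucc) 2 =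
        M.mulVec (p j.castSucc) 2
      rw [hi.2, hj.2, mul_zero]
  let e := lequiv M N hMN hNM
  have hcomap : ∀ i F, F ∈ (P i).comap (e : MvPolynomial (Fin 3) K ≃+* MvPolynomial (Fin 3) K) ↔
      ∀ n, eval (M.mulVec (p i)) (homogeneousComponent n F) = 0 := by
    intro i F
    rw [Ideal.mem_comap]
    change lsub M F ∈ P i ↔ _
    rw [hP]
    simp only [component_lsub, eval_lsub]
  rw [← hdim_comap e (fun F n hF => lsub_isHomogeneous M hF)
    (fun F n hF => lsub_isHomogeneous N hF) Im d, ← core t ht m d hmd h2, hIm, Ideal.comap_iInf]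
  congr 1
  simp only [comap_pow_equiv]
  apply le_antisymm
  · refine le_inf (le_iInf fun i => ?_) ?_
    · refine (iInf_le _ i.castSucc).trans (le_of_eq ?_)
      rw [eq_ptA _ _ (hcomap i.castSucc) (hMp i.castSucc (by simp)).1 (hMp i.castSucc (by simp)).2]
    · refine (iInf_le _ (Fin.last l)).trans (le_of_eq ?_)
      rw [eq_ptB _ _ (hcomap (Fin.last l)) hq0 hq1 hq2]
  · refine le_iInf fun i => ?_
    induction i using Fin.lastCases with
    | last =>
      rw [eq_ptB _ _ (hcomap (Fin.last l)) hq0 hq1 hq2]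
      exact inf_le_right
    | cast i =>
      rw [eq_ptA _ _ (hcomap i.castSucc) (hMp i.castSucc (by simp)).1 (hMp i.castSucc (by simp)).2]
      exact inf_le_left.trans (iInf_le _ i)
end

section
/- Suppose m = ρ·l·(l−1) for an integer ρ ≥ 1. Then for every degree d > 2m: v_d(I^{(m)}) = 1 if d = jm + w(l−1) + (l−1) for some integers j with 2 ≤ j ≤ l−1 and w with 0 ≤ w ≤ ρl − 1, and v_d(I^{(m)}) = 0 otherwise. In particular, v_d(I^{(m)}) = 0 for all d > lm and v_{lm}(I^{(m)}) = 1. -/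
open MvPolynomial Filter

theorem fp_homog_quot {K : Type*} [Field K] {A B : MvPolynomial (Fin 2) K} {a n : ℕ}
    (hA : A.IsHomogeneous a) (hAB : (A * B).IsHomogeneous n) (h0 : A * B ≠ 0) :
    a ≤ n ∧ B.IsHomogeneous (n - a) := by
  have hA0 : A ≠ 0 := left_ne_zero_of_mul h0
  have hB0 : B ≠ 0 := right_ne_zero_of_mul h0
  have hle : a ≤ n := by
    have h1 := hAB.totalDegree h0
    rw [MvPolynomial.totalDegree_mul_of_isDomain hA0 hB0, hA.totalDegree hA0] at h1
    omega
  refine ⟨hle, ?_⟩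
  let _ := MvPolynomial.gradedAlgebra (σ := Fin 2) (R := K)
  have h2 := DirectSum.coe_decompose_mul_of_left_mem_of_le
    (homogeneousSubmodule (Fin 2) K) (b := B) ((mem_homogeneousSubmodule _ _).2 hA) hle
  rw [DirectSum.decompose_of_mem_same _ ((mem_homogeneousSubmodule _ _).2 hAB)] at h2
  have h3 := mul_left_cancel₀ hA0 h2
  rw [h3]
  exact (mem_homogeneousSubmodule _ _).1 (SetLike.coe_mem _)

theorem fp_mem_pow_vars {K : Type*} [Field K] {G : MvPolynomial (Fin 2) K} {n m : ℕ}
    (hG : G.IsHomogeneous n) (h0 : G ≠ 0) :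
    G ∈ idealOfVars (Fin 2) K ^ m ↔ m ≤ n := by
  rw [mem_pow_idealOfVars_iff']
  constructor
  · intro h
    obtain ⟨s, hs⟩ := MvPolynomial.ne_zero_iff.1 h0
    by_contra hlt
    push Not at hlt
    by_cases hd : s.degree = n
    · exact hs (h s (by omega))
    · exact hs (hG.coeff_eq_zero hd)
  · intro h s hs
    exact hG.coeff_eq_zero (by omega)

theorem fp_mem_Jd {K : Type*} [Field K]
    (Ψ : MvPolynomial (Fin 3) K ≃ₐ[K] Polynomial (MvPolynomial (Fin 2) K))
    (h2 : ∀ k n G, G.IsHomogeneous n → (Ψ.symm (Polynomial.monomial k G)).IsHomogeneous (k + n))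
    (l m : ℕ) (Q : MvPolynomial (Fin 2) K) (hQ : Q.IsHomogeneous l) 
    (J : Ideal (MvPolynomial (Fin 3) K))
    (hJ : ∀ F, F ∈ J ↔ ∀ k, Q ^ (m - k) ∣ (Ψ F).coeff k ∧
      (Ψ F).coeff k ∈ idealOfVars (Fin 2) K ^ m)
    (d k e : ℕ) (G : MvPolynomial (Fin 2) K) (hG : G.IsHomogeneous e)
    (hd : d = k + l * (m - k) + e) (hm : m ≤ l * (m - k) + e) :
    Ψ.symm (Polynomial.monomial k (Q ^ (m - k) * G)) ∈ degComp J d := by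
  have hh : (Q ^ (m - k) * G).IsHomogeneous (l * (m - k) + e) := (hQ.pow _).mul hG
  refine ⟨?_, ?_⟩
  · show _ ∈ J
    rw [hJ]
    intro i
    rw [AlgEquiv.apply_symm_apply, Polynomial.coeff_monomial]
    split_ifs with hki
    · subst hki
      refine ⟨dvd_mul_right _ _, ?_⟩
      by_cases h0 : Q ^ (m - k) * G = 0
      · rw [h0]; exact zero_mem _
      · exact (fp_mem_pow_vars hh h0).2 hm
    · simp
  · have := h2 k _ _ hh
    show _ ∈ homogeneousSubmodule (Fin 3) K d
    rw [mem_homogeneousSubmodule, hd, add_assoc]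
    exact this

theorem fp_oneGen_mem {K : Type*} [Field K] {J : Ideal (MvPolynomial (Fin 3) K)} {d : ℕ}
    {f g : MvPolynomial (Fin 3) K} (hf : f.IsHomogeneous 1) (hg : g ∈ degComp J d) :
    f * g ∈ oneGen J (d + 1) :=
  Submodule.subset_span ⟨f, (mem_homogeneousSubmodule _ _).2 hf, g, by simpa using hg, rfl⟩

theorem fp_pos {K : Type*} [Field K]
    (Ψ : MvPolynomial (Fin 3) K ≃ₐ[K] Polynomial (MvPolynomial (Fin 2) K))
    (h2 : ∀ k n G, G.IsHomogeneous n → (Ψ.symm (Polynomial.monomial k G)).IsHomogeneous (k + n))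
    (l m : ℕ) (Q : MvPolynomial (Fin 2) K) (hQ : Q.IsHomogeneous l) 
    (J : Ideal (MvPolynomial (Fin 3) K))
    (hJ : ∀ F, F ∈ J ↔ ∀ k, Q ^ (m - k) ∣ (Ψ F).coeff k ∧
      (Ψ F).coeff k ∈ idealOfVars (Fin 2) K ^ m)
    (d k e : ℕ) (G : MvPolynomial (Fin 2) K) (hG : G.IsHomogeneous (e + 1))
    (hd : d = k + l * (m - k) + e) (hm : m ≤ l * (m - k) + e) :
    Ψ.symm (Polynomial.monomial k (Q ^ (m - k) * G)) ∈ oneGen J (d + 1) := by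
  rw [← MvPolynomial.support_sum_monomial_coeff G, Finset.mul_sum, map_sum, map_sum]
  refine Submodule.sum_mem _ fun s hs => ?_
  have hdeg : s.degree = e + 1 := by
    by_contra h
    exact (MvPolynomial.mem_support_iff.1 hs) (hG.coeff_eq_zero h)
  have hs0 : s ≠ 0 := by
    rintro rfl
    simp at hdeg
  obtain ⟨i, hi⟩ := Finsupp.ne_iff.1 hs0
  have hle : Finsupp.single i 1 ≤ s := by
    rw [Finsupp.single_le_iff]
    exact Nat.one_le_iff_ne_zero.2 hi
  have hs' : s = Finsupp.single i 1 + (s - Finsupp.single i 1) := (add_tsub_cancel_of_le hle).symm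
  have hdeg' : (s - Finsupp.single i 1).degree = e := by
    have := congrArg Finsupp.degree hs'
    rw [map_add, hdeg, Finsupp.degree_single] at this
    omega
  have hmon : monomial s (coeff s G) = X i * monomial (s - Finsupp.single i 1) (coeff s G) := by
    rw [X, monomial_mul, one_mul, ← hs']
  have key : Ψ.symm (Polynomial.monomial k (Q ^ (m - k) * monomial s (coeff s G)))
      = Ψ.symm (Polynomial.monomial 0 (X i)) *
        Ψ.symm (Polynomial.monomial k (Q ^ (m - k) *
          monomial (s - Finsupp.single i 1) (coeff s G))) := by
    rw [← map_mul, Polynomial.monomial_mul_monomial, hmon, zero_add]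
    congr 2
    ring
  rw [key]
  refine fp_oneGen_mem (by simpa using h2 0 1 (X i) (isHomogeneous_X _ _)) ?_
  exact fp_mem_Jd Ψ h2 l m Q hQ J hJ d k e _ (isHomogeneous_monomial _ hdeg') hd hm

/-- Every element is `oneGen` up to exceptional pieces. -/
theorem fp_gen {K : Type*} [Field K]
    (Ψ : MvPolynomial (Fin 3) K ≃ₐ[K] Polynomial (MvPolynomial (Fin 2) K))
    (h1 : ∀ (F : MvPolynomial (Fin 3) K) d, F.IsHomogeneous d → ∀ k, (Ψ F).coeff k ≠ 0 →
      k ≤ d ∧ ((Ψ F).coeff k).IsHomogeneous (d - k))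
    (h2 : ∀ k n G, G.IsHomogeneous n → (Ψ.symm (Polynomial.monomial k G)).IsHomogeneous (k + n))
    (l m : ℕ) (Q : MvPolynomial (Fin 2) K) (hQ : Q.IsHomogeneous l)
    (J : Ideal (MvPolynomial (Fin 3) K))
    (hJ : ∀ F, F ∈ J ↔ ∀ k, Q ^ (m - k) ∣ (Ψ F).coeff k ∧
      (Ψ F).coeff k ∈ idealOfVars (Fin 2) K ^ m)
    (d : ℕ) (hd : 2 * m < d) (V : Submodule K (MvPolynomial (Fin 3) K))
    (hV : oneGen J d ≤ V)
    (hV' : ∀ k ≤ m, k + l * (m - k) = d → Ψ.symm (Polynomial.monomial k (Q ^ (m - k))) ∈ V) :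
    degComp J d ≤ V := by
  rintro F ⟨hFJ, hFd⟩
  have hFJ' : F ∈ J := hFJ
  have hFd' : F.IsHomogeneous d := (mem_homogeneousSubmodule _ _).1 hFd
  rw [hJ] at hFJ'
  rw [← Ψ.symm_apply_apply F, Polynomial.as_sum_support (Ψ F), map_sum]
  refine Submodule.sum_mem _ fun k hk => ?_
  have hk0 : (Ψ F).coeff k ≠ 0 := Polynomial.mem_support_iff.1 hk
  obtain ⟨hkd, hkh⟩ := h1 F d hFd' k hk0
  obtain ⟨⟨G, hG⟩, hv⟩ := hFJ' k
  have hmn := (fp_mem_pow_vars hkh hk0).1 hv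
  rw [hG] at hkh hk0 ⊢
  obtain ⟨hle, hGh⟩ := fp_homog_quot (hQ.pow _) hkh hk0
  obtain ⟨e, he⟩ : ∃ e, e = d - k - l * (m - k) := ⟨_, rfl⟩
  rw [← he] at hGh
  obtain ⟨d, rfl⟩ : ∃ d', d = d' + 1 := ⟨d - 1, by omega⟩
  rcases Nat.lt_or_ge m k with hmk | hmk
  · -- multiple of the variable z
    obtain ⟨k, rfl⟩ : ∃ k', k = k' + 1 := ⟨k - 1, by omega⟩
    have e1 : m - (k + 1) = 0 := by omega
    have e2 : m - k = 0 := by omega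
    rw [e1]
    apply hV
    have key : Ψ.symm (Polynomial.monomial (k + 1) (Q ^ 0 * G))
      = Ψ.symm (Polynomial.monomial 1 1) * Ψ.symm (Polynomial.monomial k (Q ^ (m - k) * G)) := by
      rw [← map_mul, Polynomial.monomial_mul_monomial, e2, one_mul, add_comm]
    rw [key]
    refine fp_oneGen_mem (by simpa using h2 1 0 1 (isHomogeneous_one _ _)) ?_
    refine fp_mem_Jd Ψ h2 l m Q hQ J hJ d k e _ hGh ?_ ?_
    · rw [e2]; rw [e1] at he; omega
    · rw [e2]; rw [e1] at he; omega
  · rcases Nat.eq_zero_or_pos e with h0 | h0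
    · rw [h0] at hGh
      have hGc : ∃ c, G = C c := by
        refine ⟨coeff 0 G, ?_⟩
        rw [← totalDegree_eq_zero_iff_eq_C]
        have := hGh.totalDegree_le
        omega
      obtain ⟨c, rfl⟩ := hGc
      have := hV' k hmk (by omega)
      have h3 := V.smul_mem c this
      rw [← map_smul, Polynomial.smul_monomial] at h3
      rwa [mul_comm, ← smul_eq_C_mul]
    · obtain ⟨e, rfl⟩ : ∃ e', e = e' + 1 := ⟨e - 1, by omega⟩
      apply hV
      exact fp_pos Ψ h2 l m Q hQ J hJ d k e G hGh (by omega) (by omega)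

theorem fp_not_mem {K : Type*} [Field K]
    (Ψ : MvPolynomial (Fin 3) K ≃ₐ[K] Polynomial (MvPolynomial (Fin 2) K))
    (h1 : ∀ (F : MvPolynomial (Fin 3) K) d, F.IsHomogeneous d → ∀ k, (Ψ F).coeff k ≠ 0 →
      k ≤ d ∧ ((Ψ F).coeff k).IsHomogeneous (d - k))
    (l m : ℕ) (hl : 0 < l) (Q : MvPolynomial (Fin 2) K) (hQ : Q.IsHomogeneous l)
    (J : Ideal (MvPolynomial (Fin 3) K))
    (hJ : ∀ F, F ∈ J ↔ ∀ k, Q ^ (m - k) ∣ (Ψ F).coeff k ∧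
      (Ψ F).coeff k ∈ idealOfVars (Fin 2) K ^ m)
    (d : ℕ) (hd : 2 * m < d) (k : ℕ) (hk : k ≤ m) (hkd : k + l * (m - k) = d)
    (F : MvPolynomial (Fin 3) K) (hF : F ∈ oneGen J d) : (Ψ F).coeff k = 0 := by
  unfold oneGen at hF
  induction hF using Submodule.span_induction with
  | zero => simp
  | add x y _ _ hx hy => simp [hx, hy]
  | smul c x _ hx => simp [hx]
  | mem x hx =>
    obtain ⟨f, hf, g, ⟨hgJ, hgd⟩, rfl⟩ := hx
    have hf1 : f.IsHomogeneous 1 := (mem_homogeneousSubmodule _ _).1 hf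
    have hg1 : g.IsHomogeneous (d - 1) := (mem_homogeneousSubmodule _ _).1 hgd
    have hgJ' : g ∈ J := hgJ
    rw [hJ] at hgJ'
    rw [map_mul, Polynomial.coeff_mul]
    refine Finset.sum_eq_zero fun ij hij => ?_
    obtain ⟨i, j⟩ := ij
    rw [Finset.HasAntidiagonal.mem_antidiagonal] at hij
    simp only at hij ⊢
    by_contra hne
    have hfi := left_ne_zero_of_mul hne
    have hgj := right_ne_zero_of_mul hne
    obtain ⟨hi, -⟩ := h1 f 1 hf1 i hfi
    obtain ⟨hj, hjh⟩ := h1 g _ hg1 j hgj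
    obtain ⟨⟨G, hG⟩, -⟩ := hgJ' j
    rw [hG] at hjh hgj
    obtain ⟨hle, -⟩ := fp_homog_quot (hQ.pow _) hjh hgj
    obtain rfl | rfl : i = 0 ∨ i = 1 := by omega
    · obtain rfl : j = k := by omega
      omega
    · have : m - j = (m - k) + 1 := by omega
      rw [this, mul_add] at hle
      omega

theorem fp_vnum_zero {K : Type*} [Field K] (J : Ideal (MvPolynomial (Fin 3) K)) (d : ℕ)
    (h : degComp J d ≤ oneGen J d) : vnum J d = 0 := by
  unfold vnum
  have : Submodule.comap (degComp J d).subtype (oneGen J d) = ⊤ := by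
    rw [Submodule.comap_subtype_eq_top]; exact h
  have := Submodule.Quotient.subsingleton_iff.2 this
  exact Module.finrank_zero_of_subsingleton

theorem fp_vnum_one {K : Type*} [Field K] (J : Ideal (MvPolynomial (Fin 3) K)) (d : ℕ)
    (g : MvPolynomial (Fin 3) K) (hg : g ∈ degComp J d) (hg' : g ∉ oneGen J d)
    (h : degComp J d ≤ oneGen J d ⊔ Submodule.span K {g}) : vnum J d = 1 := by
  unfold vnum
  rw [finrank_eq_one_iff']
  refine ⟨Submodule.Quotient.mk ⟨g, hg⟩, ?_, ?_⟩
  · intro h0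
    rw [Submodule.Quotient.mk_eq_zero] at h0
    exact hg' h0
  · intro w
    obtain ⟨⟨x, hx⟩, rfl⟩ := Submodule.Quotient.mk_surjective _ w
    obtain ⟨a, ha, b, hb, hab⟩ := Submodule.mem_sup.1 (h hx)
    obtain ⟨c, rfl⟩ := Submodule.mem_span_singleton.1 hb
    refine ⟨c, ?_⟩
    rw [← Submodule.Quotient.mk_smul, Submodule.Quotient.eq]
    show c • g - x ∈ oneGen J d
    rw [← hab, show c • g - (a + c • g) = -a by abel]
    exact neg_mem ha

theorem fp_core {K : Type*} [Field K]
    (Ψ : MvPolynomial (Fin 3) K ≃ₐ[K] Polynomial (MvPolynomial (Fin 2) K))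
    (h1 : ∀ (F : MvPolynomial (Fin 3) K) d, F.IsHomogeneous d → ∀ k, (Ψ F).coeff k ≠ 0 →
      k ≤ d ∧ ((Ψ F).coeff k).IsHomogeneous (d - k))
    (h2 : ∀ k n G, G.IsHomogeneous n → (Ψ.symm (Polynomial.monomial k G)).IsHomogeneous (k + n))
    (l m : ℕ) (hl : 2 < l) (Q : MvPolynomial (Fin 2) K) (hQ : Q.IsHomogeneous l) (hQ0 : Q ≠ 0)
    (J : Ideal (MvPolynomial (Fin 3) K))
    (hJ : ∀ F, F ∈ J ↔ ∀ k, Q ^ (m - k) ∣ (Ψ F).coeff k ∧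
      (Ψ F).coeff k ∈ idealOfVars (Fin 2) K ^ m)
    (d : ℕ) (hd : 2 * m < d) :
    ((∃ k ≤ m, k + l * (m - k) = d) → vnum J d = 1) ∧
    ((¬ ∃ k ≤ m, k + l * (m - k) = d) → vnum J d = 0) := by
  constructor
  · rintro ⟨k, hk, hkd⟩
    refine fp_vnum_one J d (Ψ.symm (Polynomial.monomial k (Q ^ (m - k)))) ?_ ?_ ?_
    · have := fp_mem_Jd Ψ h2 l m Q hQ J hJ d k 0 1 (isHomogeneous_one _ _) (by omega) (by omega)
      simpa using this
    · intro h
      have := fp_not_mem Ψ h1 l m (by omega) Q hQ J hJ d hd k hk hkd _ h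
      rw [AlgEquiv.apply_symm_apply, Polynomial.coeff_monomial, if_pos rfl] at this
      exact pow_ne_zero _ hQ0 this
    · refine fp_gen Ψ h1 h2 l m Q hQ J hJ d hd _ le_sup_left ?_
      intro k' hk' hkd'
      have : k' = k := by
        obtain ⟨a, rfl⟩ := Nat.exists_eq_add_of_le hk
        obtain ⟨b, hb⟩ := Nat.exists_eq_add_of_le hk'
        have e1 : k + a - k = a := by omega
        have e2 : k + a - k' = b := by omega
        rw [e1] at hkd
        rw [e2] at hkd'
        obtain ⟨c, rfl⟩ : ∃ c, l = c + 2 := ⟨l - 2, by omega⟩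
        have : a = b := by
          have : (c + 1) * a = (c + 1) * b := by linarith
          exact Nat.eq_of_mul_eq_mul_left (by omega) this
        omega
      subst this
      exact Submodule.mem_sup_right (Submodule.mem_span_singleton_self _)
  · intro h
    refine fp_vnum_zero J d ?_
    refine fp_gen Ψ h1 h2 l m Q hQ J hJ d hd _ le_rfl ?_
    intro k hk hkd
    exact absurd ⟨k, hk, hkd⟩ h

/-- The ideal of a point is generated by the linear forms vanishing there. -/
theorem fp_point_ideal {K : Type*} [Field K] (q : Fin 3 → K) (hq : q ≠ 0)
    (P : Ideal (MvPolynomial (Fin 3) K))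
    (hP : ∀ F, F ∈ P ↔ ∀ n, eval q (homogeneousComponent n F) = 0) :
    P = Ideal.span {f | ∃ α : Fin 3 → K, ∑ j, α j * q j = 0 ∧ f = ∑ j, C (α j) * X j} := by
  apply le_antisymm
  · intro F hF
    rw [hP] at hF
    obtain ⟨j0, hj0⟩ := Function.ne_iff.1 hq
    set I := Ideal.span {f : MvPolynomial (Fin 3) K |
      ∃ α : Fin 3 → K, ∑ j, α j * q j = 0 ∧ f = ∑ j, C (α j) * X j} with hI
    set s : MvPolynomial (Fin 3) K := C (q j0)⁻¹ * X j0 with hs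
    have hX : ∀ j, Ideal.Quotient.mk I (X j) = Ideal.Quotient.mk I (C (q j) * s) := by
      intro j
      rw [Ideal.Quotient.eq]
      refine Ideal.subset_span ⟨fun i => (if i = j then 1 else 0) -
        (if i = j0 then q j * (q j0)⁻¹ else 0), ?_, ?_⟩
      · simp only [sub_mul, Finset.sum_sub_distrib, ite_mul, one_mul, zero_mul,
          Finset.sum_ite_eq', Finset.mem_univ, if_true]
        have : q j0 ≠ 0 := hj0
        field_simp
        simp
      · simp only [C_sub, sub_mul, Finset.sum_sub_distrib, apply_ite C, C_1, C_0, ite_mul, one_mul,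
          zero_mul, Finset.sum_ite_eq', Finset.mem_univ, if_true, hs, C_mul]
        ring
    have hom : ∀ (n : ℕ) (G : MvPolynomial (Fin 3) K), G.IsHomogeneous n →
        Ideal.Quotient.mk I G = Ideal.Quotient.mk I (C (eval q G) * s ^ n) := by
      intro n G hG
      have hmon : ∀ d ∈ G.support, Ideal.Quotient.mk I (monomial d (coeff d G)) =
          Ideal.Quotient.mk I (C (eval q (monomial d (coeff d G))) * s ^ n) := by
        intro d hd
        have hdn : d.degree = n := by
          by_contra h
          exact (MvPolynomial.mem_support_iff.1 hd) (hG.coeff_eq_zero h)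
        rw [eval_monomial, monomial_eq, map_mul, Finsupp.prod_fintype _ _ (by simp), map_prod,
          Finsupp.prod_fintype _ _ (by simp)]
        simp only [map_pow, hX]
        rw [← hdn, Finsupp.degree_eq_sum]
        simp only [map_mul, map_prod, map_pow, mul_pow, Finset.prod_mul_distrib,
          Finset.prod_pow_eq_pow_sum]
        ring
      conv_lhs => rw [← support_sum_monomial_coeff G]
      conv_rhs => rw [← support_sum_monomial_coeff G]
      rw [map_sum, map_sum, map_sum, Finset.sum_mul, map_sum]
      exact Finset.sum_congr rfl hmon
    rw [← sum_homogeneousComponent F]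
    refine Ideal.sum_mem _ fun n _ => ?_
    rw [← Ideal.Quotient.eq_zero_iff_mem, hom n _ (homogeneousComponent_isHomogeneous n F), hF n]
    simp
  · rw [Ideal.span_le]
    rintro f ⟨α, hα, rfl⟩
    show _ ∈ P
    rw [hP]
    intro n
    have h1 : (∑ j, C (α j) * X j : MvPolynomial (Fin 3) K).IsHomogeneous 1 :=
      IsHomogeneous.sum _ _ _ fun j _ => isHomogeneous_C_mul_X _ _
    rw [homogeneousComponent_of_mem ((mem_homogeneousSubmodule _ _).2 h1)]
    split_ifs
    · simpa using hα
    · simp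

/-- `(X, ℓ)^m` consists of the polynomials with `ℓ^(m-k)` dividing the `k`-th coefficient. -/
theorem fp_mem_pow_pair {S : Type*} [CommRing S] (t : S) (m : ℕ) (F : Polynomial S) :
    F ∈ (Ideal.span {Polynomial.X, Polynomial.C t} : Ideal (Polynomial S)) ^ m ↔
      ∀ k, t ^ (m - k) ∣ F.coeff k := by
  constructor
  · induction m generalizing F with
    | zero => intro _ k; simp
    | succ m ih =>
      intro hF
      rw [pow_succ] at hF
      refine Submodule.mul_induction_on hF ?_ ?_
      · intro a ha b hb k
        obtain ⟨u, v, rfl⟩ := Ideal.mem_span_pair.1 hb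
        rw [mul_add, ← mul_assoc, ← mul_assoc, Polynomial.coeff_add, Polynomial.coeff_mul_C]
        have h1 := ih (a * u) (Ideal.mul_mem_right _ _ ha)
        have h2 := ih (a * v) (Ideal.mul_mem_right _ _ ha)
        refine dvd_add ?_ ?_
        · cases k with
          | zero => simp
          | succ k =>
            rw [Polynomial.coeff_mul_X]
            simpa using h1 k
        · refine (pow_dvd_pow t (show m + 1 - k ≤ (m - k) + 1 by omega)).trans ?_
          rw [pow_succ]
          exact mul_dvd_mul_right (h2 k) t
      · intro x y hx hy k
        rw [Polynomial.coeff_add]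
        exact dvd_add (hx k) (hy k)
  · intro h
    rw [Polynomial.as_sum_support F]
    refine Ideal.sum_mem _ fun k _ => ?_
    obtain ⟨G, hG⟩ := h k
    rw [hG, ← Polynomial.C_mul_X_pow_eq_monomial, Polynomial.C_mul, Polynomial.C_pow]
    have hX : (Polynomial.X : Polynomial S) ∈ Ideal.span {Polynomial.X, Polynomial.C t} :=
      Ideal.subset_span (by simp)
    have hC : (Polynomial.C t : Polynomial S) ∈ Ideal.span {Polynomial.X, Polynomial.C t} :=
      Ideal.subset_span (by simp)
    have := Ideal.mul_mem_mul (Ideal.pow_mem_pow hC (m - k)) (Ideal.pow_mem_pow hX k)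
    rw [← pow_add] at this
    have := Ideal.pow_le_pow_right (show m ≤ m - k + k by omega) this
    rw [mul_right_comm]
    exact Ideal.mul_mem_right _ _ this

theorem fp_relPrime {K : Type*} [Field K] (a b c d : K) (h : a * d - b * c ≠ 0) :
    IsRelPrime (C b * X 0 - C a * X 1 : MvPolynomial (Fin 2) K) (C d * X 0 - C c * X 1) := by
  intro f hf hg
  have hu : IsUnit (C (a * d - b * c) : MvPolynomial (Fin 2) K) :=
    (isUnit_iff_ne_zero.2 h).map C
  have h0 : f ∣ X 0 := by
    rw [← hu.dvd_mul_left]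
    have := dvd_sub (hg.mul_left (C a)) (hf.mul_left (C c))
    convert this using 1
    simp only [C_sub, C_mul]
    ring
  have h1 : f ∣ X 1 := by
    rw [← hu.dvd_mul_left]
    have := dvd_sub (hg.mul_left (C b)) (hf.mul_left (C d))
    convert this using 1
    simp only [C_sub, C_mul]
    ring
  by_contra hfu
  have hirr : Irreducible (X 0 : MvPolynomial (Fin 2) K) := (X_prime (R := K) (i := (0 : Fin 2))).irreducible
  have : (X 0 : MvPolynomial (Fin 2) K) ∣ X 1 := ((hirr.dvd_iff.1 h0).resolve_left hfu).dvd.trans h1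
  rw [X_dvd_X] at this
  simp at this

/-- Linear substitution. -/
noncomputable def fpT {K : Type*} [Field K] (M : Matrix (Fin 3) (Fin 3) K) :
    MvPolynomial (Fin 3) K →ₐ[K] MvPolynomial (Fin 3) K :=
  aeval (fun j => ∑ k, C (M k j) * X k)

theorem fpT_lin {K : Type*} [Field K] (M : Matrix (Fin 3) (Fin 3) K) (α : Fin 3 → K) :
    fpT M (∑ j, C (α j) * X j) = ∑ k, C (∑ j, α j * M k j) * X k := by
  simp only [fpT, map_sum, map_mul, aeval_X, algHom_C, algebraMap_eq, Finset.sum_mul,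
    Finset.mul_sum]
  rw [Finset.sum_comm]
  simp only [mul_assoc]

theorem fpT_mul {K : Type*} [Field K] (M N : Matrix (Fin 3) (Fin 3) K) :
    (fpT M).comp (fpT N) = fpT (M * N) := by
  apply MvPolynomial.algHom_ext
  intro j
  have : fpT N (X j) = ∑ k, C (N k j) * X k := by simp [fpT]
  rw [AlgHom.comp_apply, this, fpT_lin]
  simp [fpT, Matrix.mul_apply, mul_comm]

theorem fpT_one {K : Type*} [Field K] :
    fpT (1 : Matrix (Fin 3) (Fin 3) K) = AlgHom.id K _ := by
  apply MvPolynomial.algHom_ext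
  intro j
  simp [fpT, Matrix.one_apply, apply_ite C]

theorem fpT_hom {K : Type*} [Field K] (M : Matrix (Fin 3) (Fin 3) K)
    {F : MvPolynomial (Fin 3) K} {d : ℕ} (hF : F.IsHomogeneous d) : (fpT M F).IsHomogeneous d := by
  have := hF.aeval (fun j => ∑ k, C (M k j) * X k : Fin 3 → MvPolynomial (Fin 3) K) (n := 1)
    (fun j => IsHomogeneous.sum _ _ _ fun k _ => isHomogeneous_C_mul_X _ _)
  simpa [fpT] using this

/-- Linear change of coordinates followed by singling out the first variable. -/
noncomputable def fpPsi {K : Type*} [Field K] (M : Matrix (Fin 3) (Fin 3) K) (hM : IsUnit M.det) :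
    MvPolynomial (Fin 3) K ≃ₐ[K] Polynomial (MvPolynomial (Fin 2) K) :=
  (AlgEquiv.ofAlgHom (fpT M) (fpT M⁻¹)
    (by rw [fpT_mul, Matrix.mul_nonsing_inv _ hM, fpT_one])
    (by rw [fpT_mul, Matrix.nonsing_inv_mul _ hM, fpT_one])).trans (finSuccEquiv K 2)

theorem fpPsi_apply {K : Type*} [Field K] (M : Matrix (Fin 3) (Fin 3) K) (hM : IsUnit M.det)
    (F : MvPolynomial (Fin 3) K) : fpPsi M hM F = finSuccEquiv K 2 (fpT M F) := rfl

theorem fpPsi_symm_apply {K : Type*} [Field K] (M : Matrix (Fin 3) (Fin 3) K) (hM : IsUnit M.det)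
    (G : Polynomial (MvPolynomial (Fin 2) K)) :
    (fpPsi M hM).symm G = fpT M⁻¹ ((finSuccEquiv K 2).symm G) := rfl

theorem fpPsi_h1 {K : Type*} [Field K] (M : Matrix (Fin 3) (Fin 3) K) (hM : IsUnit M.det)
    (F : MvPolynomial (Fin 3) K) (d : ℕ) (hF : F.IsHomogeneous d) (k : ℕ)
    (hk : (fpPsi M hM F).coeff k ≠ 0) :
    k ≤ d ∧ ((fpPsi M hM F).coeff k).IsHomogeneous (d - k) := by
  rw [fpPsi_apply] at *
  have hF' := fpT_hom M hF
  have hle : k ≤ d := by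
    have := totalDegree_coeff_finSuccEquiv_add_le (fpT M F) k hk
    have := hF'.totalDegree_le
    omega
  exact ⟨hle, hF'.finSuccEquiv_coeff_isHomogeneous k (d - k) (by omega)⟩

theorem fpPsi_h2 {K : Type*} [Field K] (M : Matrix (Fin 3) (Fin 3) K) (hM : IsUnit M.det)
    (k n : ℕ) (G : MvPolynomial (Fin 2) K) (hG : G.IsHomogeneous n) :
    ((fpPsi M hM).symm (Polynomial.monomial k G)).IsHomogeneous (k + n) := by
  rw [fpPsi_symm_apply]
  apply fpT_hom
  have hren : finSuccEquiv K 2 (rename Fin.succ G) = Polynomial.C G := by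
    clear hG
    induction G using MvPolynomial.induction_on with
    | C a => simp [finSuccEquiv_apply]
    | add p q hp hq => rw [map_add, map_add, hp, hq, Polynomial.C_add]
    | mul_X p i hp => rw [map_mul, map_mul, hp, rename_X, finSuccEquiv_X_succ, Polynomial.C_mul]
  have : (finSuccEquiv K 2).symm (Polynomial.monomial k G) = X 0 ^ k * rename Fin.succ G := by
    rw [AlgEquiv.symm_apply_eq, map_mul, map_pow, finSuccEquiv_X_zero, hren,
      ← Polynomial.C_mul_X_pow_eq_monomial, mul_comm]
  rw [this]
  exact (isHomogeneous_X_pow _ _).mul hG.rename_isHomogeneous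

theorem fpPsi_lin {K : Type*} [Field K] (M : Matrix (Fin 3) (Fin 3) K) (hM : IsUnit M.det)
    (α : Fin 3 → K) :
    fpPsi M hM (∑ j, C (α j) * X j) =
      Polynomial.C (C (∑ j, α j * M 0 j)) * Polynomial.X +
      Polynomial.C (C (∑ j, α j * M 1 j) * X 0 + C (∑ j, α j * M 2 j) * X 1) := by
  rw [fpPsi_apply, fpT_lin, Fin.sum_univ_three (fun k => C (∑ j, α j * M k j) * X k)]
  have hc : ∀ r : K, finSuccEquiv K 2 (C r) = Polynomial.C (C r) := fun r => by
    simp [finSuccEquiv_apply]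
  rw [map_add, map_add, map_mul, map_mul, map_mul, hc, hc, hc, finSuccEquiv_X_zero,
    show (1 : Fin 3) = Fin.succ (0 : Fin 2) from rfl,
    show (2 : Fin 3) = Fin.succ (1 : Fin 2) from rfl,
    finSuccEquiv_X_succ, finSuccEquiv_X_succ, Polynomial.C_add, Polynomial.C_mul, Polynomial.C_mul,
    add_assoc]

theorem fp_exists_lin {K : Type*} [Field K] (M : Matrix (Fin 3) (Fin 3) K) (hM : IsUnit M.det)
    (β : Fin 3 → K) : ∃ α : Fin 3 → K, ∀ k, ∑ j, α j * M k j = β k := by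
  refine ⟨Matrix.mulVec M⁻¹ β, fun k => ?_⟩
  have : Matrix.mulVec M (Matrix.mulVec M⁻¹ β) = β := by
    rw [Matrix.mulVec_mulVec, Matrix.mul_nonsing_inv _ hM, Matrix.one_mulVec]
  have := congrFun this k
  rw [← this]
  simp [Matrix.mulVec, dotProduct, mul_comm]

theorem fp_exists_comb {K : Type*} [Field K] (M : Matrix (Fin 3) (Fin 3) K) (hM : IsUnit M.det)
    (v : Fin 3 → K) : ∃ c : Fin 3 → K, ∀ j, v j = ∑ k, c k * M k j := by
  refine ⟨Matrix.vecMul v M⁻¹, fun j => ?_⟩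
  have : Matrix.vecMul (Matrix.vecMul v M⁻¹) M = v := by
    rw [Matrix.vecMul_vecMul, Matrix.nonsing_inv_mul _ hM, Matrix.vecMul_one]
  conv_lhs => rw [← this]
  rfl

/-- Image of the ideal of a point on the line. -/
theorem fp_map_on {K : Type*} [Field K] (M : Matrix (Fin 3) (Fin 3) K) (hM : IsUnit M.det)
    (q : Fin 3 → K) (a b : K) (hq : ∀ j, q j = a * M 1 j + b * M 2 j) (hab : a ≠ 0 ∨ b ≠ 0) :
    Ideal.map (fpPsi M hM) (Ideal.span {f | ∃ α : Fin 3 → K, ∑ j, α j * q j = 0 ∧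
      f = ∑ j, C (α j) * X j}) =
    Ideal.span {Polynomial.X, Polynomial.C (C b * X 0 - C a * X 1)} := by
  have hsum : ∀ α : Fin 3 → K, ∑ j, α j * q j =
      a * (∑ j, α j * M 1 j) + b * (∑ j, α j * M 2 j) := by
    intro α
    rw [Finset.mul_sum, Finset.mul_sum, ← Finset.sum_add_distrib]
    refine Finset.sum_congr rfl fun j _ => ?_
    rw [hq]; ring
  rw [Ideal.map_span]
  apply le_antisymm
  · rw [Ideal.span_le]
    rintro _ ⟨_, ⟨α, hα, rfl⟩, rfl⟩
    rw [hsum] at hα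
    rw [SetLike.mem_coe, fpPsi_lin, Ideal.mem_span_pair]
    obtain ⟨c, d, hcd⟩ : ∃ c d : K, c * a + d * b = 1 := by
      rcases hab with h | h
      · exact ⟨a⁻¹, 0, by field_simp; simp⟩
      · exact ⟨0, b⁻¹, by field_simp; simp⟩
    set u := ∑ j, α j * M 1 j
    set v := ∑ j, α j * M 2 j
    refine ⟨Polynomial.C (C (∑ j, α j * M 0 j)), Polynomial.C (C (d * u - c * v)), ?_⟩
    rw [← Polynomial.C_mul]
    congr 2
    have e1 : u = (d * u - c * v) * b := by linear_combination (-u) * hcd + c * hα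
    have e2 : v = -((d * u - c * v) * a) := by linear_combination (-v) * hcd + d * hα
    have e1' := congrArg (C : K → MvPolynomial (Fin 2) K) e1
    have e2' := congrArg (C : K → MvPolynomial (Fin 2) K) e2
    simp only [C_mul, C_neg, C_sub] at e1' e2' ⊢
    linear_combination (-X 0) * e1' - X 1 * e2'
  · rw [Ideal.span_le]
    rintro f (rfl | rfl)
    · obtain ⟨α, hα⟩ := fp_exists_lin M hM ![1, 0, 0]
      refine Ideal.subset_span ⟨_, ⟨α, ?_, rfl⟩, ?_⟩
      · rw [hsum, hα, hα]; simp
      · rw [fpPsi_lin, hα, hα, hα]; simp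
    · obtain ⟨α, hα⟩ := fp_exists_lin M hM ![0, b, -a]
      refine Ideal.subset_span ⟨_, ⟨α, ?_, rfl⟩, ?_⟩
      · rw [hsum, hα, hα]; simp; ring
      · rw [fpPsi_lin, hα, hα, hα]; simp [sub_eq_add_neg]

/-- Image of the ideal of the point off the line. -/
theorem fp_map_off {K : Type*} [Field K] (M : Matrix (Fin 3) (Fin 3) K) (hM : IsUnit M.det)
    (q : Fin 3 → K) (hq : ∀ j, q j = M 0 j) :
    Ideal.map (fpPsi M hM) (Ideal.span {f | ∃ α : Fin 3 → K, ∑ j, α j * q j = 0 ∧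
      f = ∑ j, C (α j) * X j}) =
    Ideal.map (Polynomial.C : MvPolynomial (Fin 2) K →+* _) (idealOfVars (Fin 2) K) := by
  simp only [hq]
  rw [Ideal.map_span, idealOfVars, Ideal.map_span]
  apply le_antisymm
  · rw [Ideal.span_le]
    rintro _ ⟨_, ⟨α, hα, rfl⟩, rfl⟩
    rw [SetLike.mem_coe, fpPsi_lin, hα, C_0, map_zero, zero_mul, zero_add, Polynomial.C_add,
      Polynomial.C_mul, Polynomial.C_mul]
    exact Ideal.add_mem _ (Ideal.mul_mem_left _ _ (Ideal.subset_span ⟨_, ⟨0, rfl⟩, rfl⟩))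
      (Ideal.mul_mem_left _ _ (Ideal.subset_span ⟨_, ⟨1, rfl⟩, rfl⟩))
  · rw [Ideal.span_le]
    rintro _ ⟨_, ⟨i, rfl⟩, rfl⟩
    fin_cases i
    · obtain ⟨α, hα⟩ := fp_exists_lin M hM ![0, 1, 0]
      refine Ideal.subset_span ⟨_, ⟨α, ?_, rfl⟩, ?_⟩
      · rw [hα]; simp
      · rw [fpPsi_lin, hα, hα, hα]; simp
    · obtain ⟨α, hα⟩ := fp_exists_lin M hM ![0, 0, 1]
      refine Ideal.subset_span ⟨_, ⟨α, ?_, rfl⟩, ?_⟩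
      · rw [hα]; simp
      · rw [fpPsi_lin, hα, hα, hα]; simp

theorem fp_mem_pow_map {R S : Type*} [CommRing R] [CommRing S] {K : Type*} [Field K]
    [Algebra K R] [Algebra K S] (e : R ≃ₐ[K] S) (I : Ideal R) (m : ℕ) (x : R) :
    x ∈ I ^ m ↔ e x ∈ (Ideal.map e I) ^ m := by
  rw [← Ideal.map_pow, Ideal.mem_map_of_equiv]
  constructor
  · intro h; exact ⟨x, h, rfl⟩
  · rintro ⟨y, hy, h⟩
    rwa [← e.injective h]

theorem fp_arith (l : ℕ) (hl : 2 < l) (ρ : ℕ) (hρ : 1 ≤ ρ) (m : ℕ) (hm : m = ρ * l * (l - 1))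
    (d : ℕ) (hd : 2 * m < d) :
    (∃ k ≤ m, k + l * (m - k) = d) ↔
      (∃ j w : ℕ, 2 ≤ j ∧ j ≤ l - 1 ∧ w ≤ ρ * l - 1 ∧
          d = j * m + w * (l - 1) + (l - 1)) := by
  obtain ⟨n, rfl⟩ : ∃ n, l = n + 1 := ⟨l - 1, by omega⟩
  simp only [Nat.add_sub_cancel] at *
  set r := ρ * (n + 1) with hr
  have hr0 : 0 < r := by positivity
  constructor
  · rintro ⟨k, hk, hkd⟩
    obtain ⟨t, rfl⟩ := Nat.exists_eq_add_of_le hk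
    rw [Nat.add_sub_cancel_left] at hkd
    -- N = r * (n+1) - k
    have hk2 : d = n * (r + t) := by
      rw [← hkd]
      have : n * (r + t) = (r * n) + n * t := by ring
      rw [this, ← hm]; ring
    have hN : 2 * r < r + t := by
      by_contra h
      push Not at h
      have := Nat.mul_le_mul_left n h
      nlinarith
    have htle : t ≤ r * n := by omega
    refine ⟨(r + t - 1) / r, (r + t - 1) % r, ?_, ?_, ?_, ?_⟩
    · rw [Nat.le_div_iff_mul_le hr0]; omega
    · rw [← Nat.lt_succ_iff, Nat.div_lt_iff_lt_mul hr0]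
      have : (n + 1) * r = r * n + r := by ring
      rw [Nat.succ_eq_add_one, this]
      omega
    · have := Nat.mod_lt (r + t - 1) hr0
      omega
    · have h3 := Nat.div_add_mod (r + t - 1) r
      set j := (r + t - 1) / r
      set w := (r + t - 1) % r
      have h4 : r + t = r * j + w + 1 := by omega
      rw [hk2, h4, hm]
      ring
  · rintro ⟨j, w, hj2, hjn, hw, rfl⟩
    have hbig : j * r + w + 1 ≤ r * n + r := by
      have := Nat.mul_le_mul_right r hjn
      have e : n * r = r * n := by ring
      omega
    have hsmall : r ≤ j * r + w + 1 := by
      have := Nat.mul_le_mul_right r hj2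
      omega
    obtain ⟨t, ht⟩ := Nat.exists_eq_add_of_le hsmall
    have htm : t ≤ m := by omega
    refine ⟨m - t, by omega, ?_⟩
    have e : m - (m - t) = t := by omega
    rw [e]
    have h5 : j * m + w * n + n = n * (j * r + w + 1) := by rw [hm]; ring
    rw [h5, ht]
    have h6 : n * (r + t) = m + n * t := by rw [hm]; ring
    have h7 : (n + 1) * t = n * t + t := by ring
    omega

theorem stmt_4
    (K : Type*) [Field K] [CharZero K]
    -- `l > 2` points on a line plus one point off the line
    (l : ℕ) (hl : 2 < l)
    (p : Fin (l + 1) → Fin 3 → K) (hp0 : ∀ i, p i ≠ 0)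
    (hdist : ∀ i j, i ≠ j → ∀ c : K, c • p i ≠ p j)
    (L : Fin 3 → K) (hL : L ≠ 0)
    (hon : ∀ i : Fin (l + 1), (i : ℕ) < l → ∑ j, L j * p i j = 0)
    (hoff : ∑ j, L j * p (Fin.last l) j ≠ 0)
    -- `P i` is the homogeneous prime ideal of all forms vanishing at `p i`
    (P : Fin (l + 1) → Ideal (MvPolynomial (Fin 3) K))
    (hP : ∀ i F, F ∈ P i ↔ ∀ n, eval (p i) (homogeneousComponent n F) = 0)
    -- `m = ρ·l·(l−1)` with `ρ ≥ 1`
    (ρ : ℕ) (hρ : 1 ≤ ρ) (m : ℕ) (hm : m = ρ * l * (l - 1))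
    -- the uniform fat point ideal `I^{(m)} = P_1^m ∩ ⋯ ∩ P_{l+1}^m`
    (Im : Ideal (MvPolynomial (Fin 3) K)) (hIm : Im = ⨅ i, P i ^ m) :
    (∀ d : ℕ, 2 * m < d →
      ((∃ j w : ℕ, 2 ≤ j ∧ j ≤ l - 1 ∧ w ≤ ρ * l - 1 ∧
          d = j * m + w * (l - 1) + (l - 1)) →
        vnum Im d = 1) ∧
      (¬(∃ j w : ℕ, 2 ≤ j ∧ j ≤ l - 1 ∧ w ≤ ρ * l - 1 ∧
          d = j * m + w * (l - 1) + (l - 1)) →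
        vnum Im d = 0)) ∧
    (∀ d : ℕ, l * m < d → vnum Im d = 0) ∧
    vnum Im (l * m) = 1 := by
    classical
  have hPi : ∀ i, P i = Ideal.span {f | ∃ α : Fin 3 → K, ∑ j, α j * p i j = 0 ∧
      f = ∑ j, C (α j) * X j} := fun i => fp_point_ideal (p i) (hp0 i) (P i) (hP i)
  set i0 : Fin (l + 1) := ⟨0, by omega⟩ with hi0
  set i1 : Fin (l + 1) := ⟨1, by omega⟩ with hi1
  have h01 : i0 ≠ i1 := by simp [hi0, hi1]
  have hL0 : ∑ j, L j * p i0 j = 0 := hon i0 (by simp [hi0]; omega)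
  have hL1 : ∑ j, L j * p i1 j = 0 := hon i1 (by simp [hi1]; omega)
  set M : Matrix (Fin 3) (Fin 3) K := Matrix.of ![p (Fin.last l), p i0, p i1] with hMdef
  have hM0 : ∀ j, M 0 j = p (Fin.last l) j := fun j => rfl
  have hM1 : ∀ j, M 1 j = p i0 j := fun j => rfl
  have hM2 : ∀ j, M 2 j = p i1 j := fun j => rfl
  -- applying the linear form `L` to a combination of the three points
  have hLc : ∀ (c : Fin 3 → K) (v : Fin 3 → K), (∀ j, v j = ∑ k, c k * M k j) →
      ∑ j, L j * v j = c 0 * ∑ j, L j * p (Fin.last l) j := by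
    intro c v hv
    have : ∑ j, L j * v j = c 0 * (∑ j, L j * p (Fin.last l) j) + c 1 * (∑ j, L j * p i0 j)
        + c 2 * (∑ j, L j * p i1 j) := by
      rw [Finset.mul_sum, Finset.mul_sum, Finset.mul_sum, ← Finset.sum_add_distrib,
        ← Finset.sum_add_distrib]
      refine Finset.sum_congr rfl fun j _ => ?_
      rw [hv, Fin.sum_univ_three, hM0, hM1, hM2]
      ring
    rw [this, hL0, hL1]
    ring
  have hM : IsUnit M.det := by
    rw [← Matrix.isUnit_iff_isUnit_det, ← Matrix.linearIndependent_rows_iff_isUnit,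
      Fintype.linearIndependent_iff]
    intro g hg
    have hg' : ∀ j, (0 : K) = ∑ k, g k * M k j := by
      intro j
      have := congrFun hg j
      simpa [Finset.sum_apply, Matrix.row] using this.symm
    have hg0 : g 0 = 0 := by
      have := hLc g (fun _ => 0) hg'
      simp only [mul_zero, Finset.sum_const_zero] at this
      exact (mul_eq_zero.1 this.symm).resolve_right hoff
    have hg'' : ∀ j, g 1 * p i0 j + g 2 * p i1 j = 0 := by
      intro j
      have := hg' j
      rw [Fin.sum_univ_three, hM1, hM2, hg0, zero_mul, zero_add] at this
      exact this.symm
    have hg2 : g 2 = 0 := by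
      by_contra h
      refine hdist i0 i1 h01 (-(g 1 / g 2)) ?_
      funext j
      simp only [Pi.smul_apply, smul_eq_mul]
      have := hg'' j
      field_simp
      linear_combination (-1 : K) * this
    have hg1 : g 1 = 0 := by
      by_contra h
      refine hp0 i0 ?_
      funext j
      have := hg'' j
      rw [hg2, zero_mul, add_zero] at this
      exact (mul_eq_zero.1 this).resolve_left h
    intro k
    fin_cases k
    · exact hg0
    · exact hg1
    · exact hg2
  have hex : ∀ i : Fin l, ∃ a b : K, ∀ j, p i.castSucc j = a * M 1 j + b * M 2 j := by
    intro i
    obtain ⟨c, hc⟩ := fp_exists_comb M hM (p i.castSucc)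
    have h0 := hLc c _ hc
    rw [hon i.castSucc (by simp)] at h0
    have hc0 : c 0 = 0 := (mul_eq_zero.1 h0.symm).resolve_right hoff
    refine ⟨c 1, c 2, fun j => ?_⟩
    rw [hc, Fin.sum_univ_three, hc0]
    ring
  choose a b hab using hex
  have hab0 : ∀ i, a i ≠ 0 ∨ b i ≠ 0 := by
    intro i
    by_contra h
    push Not at h
    refine hp0 i.castSucc ?_
    funext j
    rw [hab, h.1, h.2]
    simp
  have hdet : ∀ i j, i ≠ j → a i * b j - b i * a j ≠ 0 := by
    intro i j hij h
    have hne : i.castSucc ≠ j.castSucc := fun h => hij (Fin.castSucc_injective _ h)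
    rcases hab0 i with h0 | h0
    · refine hdist _ _ hne (a j / a i) ?_
      funext t
      simp only [Pi.smul_apply, smul_eq_mul]
      rw [hab, hab]
      field_simp
      linear_combination (-M 2 t) * h
    · refine hdist _ _ hne (b j / b i) ?_
      funext t
      simp only [Pi.smul_apply, smul_eq_mul]
      rw [hab, hab]
      field_simp
      linear_combination (M 1 t) * h
  set ℓ : Fin l → MvPolynomial (Fin 2) K := fun i => C (b i) * X 0 - C (a i) * X 1 with hℓ
  set Q : MvPolynomial (Fin 2) K := ∏ i, ℓ i with hQdef
  have hQ : Q.IsHomogeneous l := by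
    have := IsHomogeneous.prod Finset.univ ℓ (fun _ => 1)
      (fun i _ => (isHomogeneous_C_mul_X _ _).sub (isHomogeneous_C_mul_X _ _))
    simpa using this
  have hQ0 : Q ≠ 0 := by
    rw [hQdef, Finset.prod_ne_zero_iff]
    intro i _ h0
    have e1 := congrArg (eval ![1, 0]) h0
    have e2 := congrArg (eval ![0, 1]) h0
    simp [hℓ] at e1 e2
    rcases hab0 i with h | h
    · exact h e2
    · exact h e1
  have hJ : ∀ F, F ∈ Im ↔ ∀ k, Q ^ (m - k) ∣ (fpPsi M hM F).coeff k ∧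
      (fpPsi M hM F).coeff k ∈ idealOfVars (Fin 2) K ^ m := by
    intro F
    rw [hIm, Ideal.mem_iInf, Fin.forall_fin_succ', forall_and]
    refine and_congr ?_ ?_
    · have : ∀ i : Fin l, F ∈ P i.castSucc ^ m ↔
          ∀ k, ℓ i ^ (m - k) ∣ (fpPsi M hM F).coeff k := by
        intro i
        rw [fp_mem_pow_map (fpPsi M hM), hPi, fp_map_on M hM _ (a i) (b i) (hab i) (hab0 i),
          fp_mem_pow_pair]
      simp only [this]
      rw [forall_comm]
      refine forall_congr' fun k => ?_
      rw [hQdef, ← Finset.prod_pow]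
      constructor
      · intro h
        refine Fintype.prod_dvd_of_isRelPrime ?_ h
        intro i j hij
        exact (fp_relPrime _ _ _ _ (hdet i j hij)).pow
      · intro h i
        exact (Finset.dvd_prod_of_mem (fun i => ℓ i ^ (m - k)) (Finset.mem_univ i)).trans h
    · rw [fp_mem_pow_map (fpPsi M hM), hPi, fp_map_off M hM _ (fun j => (hM0 j).symm),
        ← Ideal.map_pow, Ideal.mem_map_C_iff]
  have core := fun d hd => fp_core (fpPsi M hM) (fpPsi_h1 M hM) (fpPsi_h2 M hM) l m hl Q hQ hQ0 Im
    hJ d hd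
  have harith := fun d hd => fp_arith l hl ρ hρ m hm d hd
  have hmpos : 0 < m := by
    rw [hm]
    have : 0 < l - 1 := by omega
    positivity
  have hlm : 2 * m < l * m := Nat.mul_lt_mul_of_pos_right hl hmpos
  refine ⟨fun d hd => ?_, fun d hd => ?_, ?_⟩
  · rw [← harith d hd]
    exact core d hd
  · refine (core d (hlm.trans hd)).2 ?_
    rintro ⟨k, hk, hkd⟩
    obtain ⟨t, rfl⟩ := Nat.exists_eq_add_of_le hk
    rw [Nat.add_sub_cancel_left] at hkd
    have : 1 * k ≤ l * k := Nat.mul_le_mul_right k (by omega)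
    rw [mul_add] at hd
    omega
  · exact (core _ hlm).1 ⟨0, by omega, by simp⟩
end
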